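/- Let s : X^ℤ → X^ℤ be the time shift defined by (sw)(n) = w(n+1), extended to X^ℤ × Ξ by s(w,ξ) = (sw,ξ). Then for every set A in the product σ-algebra on X^ℤ × Ξ that is invariant under the diagonal action of the isometries of X, one has P̂_0[sA] = P̂_0[A]. -/

import Mathlib

open MeasureTheory Metric Set Bornology Function
open scoped ENNReal NNReal unitInterval

noncomputable section

namespace BooleanModel

/-- The space of simple, locally finite point configurations on a metric space `X`
(realizations of simple counting measures on `X`). -/
def Config (X : Type*) [MetricSpace X] : Type _ :=
  {s : Set X // ∀ K : Set X, IsBounded K → (s ∩ K).Finite}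

namespace Config

variable {X : Type*} [MetricSpace X]

/-- The σ-algebra on `Config X` generated by the evaluation (counting) maps `ω ↦ ω(B)`. -/
instance instMeasurableSpace [MeasurableSpace X] : MeasurableSpace (Config X) :=
  MeasurableSpace.generateFrom
    {A | ∃ (B : Set X) (n : ℕ∞), MeasurableSet B ∧ A = {s : Config X | (s.1 ∩ B).encard = n}}

/-- The number of points of the configuration `s` lying in `B`. -/
def count (B : Set X) (s : Config X) : ℕ∞ := (s.1 ∩ B).encard

/-- Adding a point to a configuration (`ω + δ_y`). -/
def insertPt (y : X) (s : Config X) : Config X :=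
  ⟨insert y s.1, by
    intro K hK
    refine ((s.2 K hK).insert y).subset ?_
    rintro z ⟨hz1, hz2⟩
    rcases Set.mem_insert_iff.1 hz1 with rfl | h
    · exact Set.mem_insert _ _
    · exact Set.mem_insert_of_mem _ ⟨h, hz2⟩⟩

/-- The restriction `ω|_{B^c}` of a configuration to the complement of `B`. -/
def restrict (B : Set X) (s : Config X) : Config X :=
  ⟨s.1 ∩ Bᶜ, fun K hK => (s.2 K hK).subset fun z hz => ⟨hz.1.1, hz.2⟩⟩

/-- Push-forward of a configuration under an isometry of `X`. -/
def mapIso (γ : X ≃ᵢ X) (s : Config X) : Config X :=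
  ⟨⇑γ '' s.1, by
    intro K hK
    have h1 : ⇑γ ⁻¹' K = ⇑γ.symm '' K := by
      ext z
      constructor
      · intro hz; exact ⟨γ z, hz, γ.symm_apply_apply z⟩
      · rintro ⟨w, hw, rfl⟩; simpa using hw
    have h2 : ⇑γ '' s.1 ∩ K = ⇑γ '' (s.1 ∩ ⇑γ ⁻¹' K) := (Set.image_inter_preimage _ _ _).symm
    rw [h2]
    refine (s.2 _ ?_).image _
    rw [h1]
    exact γ.symm.isometry.lipschitz.isBounded_image hK⟩

end Config

section BasicDefs

variable {X : Type*} [MetricSpace X]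

/-- The occupied set of the Boolean model with unit radii driven by `s`. -/
def occupied (s : Config X) : Set X := ⋃ x ∈ s.1, closedBall x 1

/-- The vacant set of the Boolean model with unit radii driven by `s`. -/
def vacant (s : Config X) : Set X := (occupied s)ᶜ

/-- The collection of connected components of a set `S ⊆ X`. -/
def comps (S : Set X) : Set (Set X) := {C | ∃ x ∈ S, C = connectedComponentIn S x}

/-- The collection of unbounded connected components of `S`. -/
def ucomps (S : Set X) : Set (Set X) := {C | C ∈ comps S ∧ ¬IsBounded C}

/-- The number of connected components of `S`. -/
def numComps (S : Set X) : ℕ∞ := (comps S).encard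

/-- `N_S`: the number of unbounded connected components of `S`. -/
def numUcomps (S : Set X) : ℕ∞ := (ucomps S).encard

/-- A metric space is point-symmetric (the metric counterpart of being a Riemannian
symmetric space) if every point `x` admits a geodesic-reversing isometry fixing `x`,
i.e. an isometric point reflection around `x`. -/
def PointSymmetric (X : Type*) [MetricSpace X] : Prop :=
  ∀ x : X, ∃ invol : X ≃ᵢ X, invol x = x ∧ ∀ y : X, dist y (invol y) = 2 * dist x y

/-- The local connected component `C_S(y,r)`. -/
def localComp (S : Set X) (y : X) (r : ℝ) : Set X :=
  connectedComponentIn (S ∩ closedBall y r) y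

end BasicDefs

section MeasureDefs

variable {X : Type*} [MetricSpace X] [MeasurableSpace X]

/-- A measure on `Config X` is isometry invariant if it is preserved by the push-forward
action of every isometry of `X`. -/
def IsoInvariant (P : Measure (Config X)) : Prop :=
  ∀ γ : X ≃ᵢ X, Measure.map (Config.mapIso γ) P = P

/-- Every isometry-invariant event has probability `0` or `1`. -/
def ErgodicIso (P : Measure (Config X)) : Prop :=
  ∀ E : Set (Config X), MeasurableSet E →
    (∀ γ : X ≃ᵢ X, Config.mapIso γ ⁻¹' E = E) → P E = 0 ∨ P E = 1

/-- `P` is insertion-tolerant: for every Borel `B` with `0 < μ B < ∞`, the law of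
`ω + δ_Y` with `Y` uniform in `B` independent of `ω` is absolutely continuous w.r.t. `P`. -/
def InsertionTolerant (μ : Measure X) (P : Measure (Config X)) : Prop :=
  ∀ B : Set X, MeasurableSet B → 0 < μ B → μ B < ⊤ →
    Measure.map (fun p : Config X × X => Config.insertPt p.2 p.1)
      (P.prod ((μ B)⁻¹ • μ.restrict B)) ≪ P

/-- `P` is deletion-tolerant: for every Borel `B` with `0 < μ B < ∞`, the law of
`ω|_{B^c}` is absolutely continuous w.r.t. `P`. -/
def DeletionTolerant (μ : Measure X) (P : Measure (Config X)) : Prop :=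
  ∀ B : Set X, MeasurableSet B → 0 < μ B → μ B < ⊤ →
    Measure.map (Config.restrict B) P ≪ P

/-- `P` is the law of the Poisson point measure on `X` with intensity `ν`:
counts in disjoint Borel sets are independent with the correct Poisson distributions. -/
def IsPoisson (ν : Measure X) (P : Measure (Config X)) : Prop :=
  IsProbabilityMeasure P ∧
  (∀ B : Set X, MeasurableSet B → ν B < ⊤ → ∀ k : ℕ,
      P {s : Config X | Config.count B s = k} =
        ENNReal.ofReal (Real.exp (-(ν B).toReal) * (ν B).toReal ^ k / (Nat.factorial k))) ∧
  (∀ B : Set X, MeasurableSet B → ν B = ⊤ → P {s : Config X | (s.1 ∩ B).Infinite} = 1) ∧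
  (∀ (n : ℕ) (B : Fin n → Set X) (k : Fin n → ℕ),
      (∀ i, MeasurableSet (B i)) → (Pairwise fun i j => Disjoint (B i) (B j)) →
      P {s : Config X | ∀ i, Config.count (B i) s = k i} =
        ∏ i, P {s : Config X | Config.count (B i) s = k i})

end MeasureDefs

section PathDefs

variable {X : Type*} [MetricSpace X]

/-- The intrinsic distance between `x` and `y` within the set `S`: the infimum of the lengths
of continuous paths from `x` to `y` whose range is contained in `S`. -/
def pathDistIn (S : Set X) (x y : X) : ℝ≥0∞ :=
  ⨅ (γ : Path x y) (_ : Set.range ⇑γ ⊆ S), eVariationOn ⇑γ Set.univ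

/-- Intrinsic distance within `S` between two subsets `A` and `B`. -/
def setDistIn (S A B : Set X) : ℝ≥0∞ :=
  ⨅ (a : X) (_ : a ∈ A) (b : X) (_ : b ∈ B), pathDistIn S a b

/-- `y` is an `r`-trifurcation (marked by a point of `Y`) for the set `S`. -/
def IsTrifurcation (S : Set X) (Y : Set X) (r : ℝ) (y : X) : Prop :=
  y ∈ Y ∧ closedBall y 1 ⊆ S ∧ (∀ y' ∈ Y, y' ≠ y → 2 * r < dist y y') ∧
    3 ≤ numUcomps (connectedComponentIn S y \ localComp S y r)

end PathDefs

end BooleanModel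
namespace BooleanModel

section RandomWalk

open scoped Classical

variable {X : Type*} [MetricSpace X]

/-- The vertex set of the graph represented by the symmetric configuration `g` on `X²`. -/
def gVertices (g : Config (X × X)) : Set X := {x | ∃ y, (x, y) ∈ g.1}

/-- `c_G(x) = d_G(x) + 1`, the degree of `x` plus one. -/
def gC (g : Config (X × X)) (x : X) : ℝ≥0∞ := ({y | (x, y) ∈ g.1}.encard : ℝ≥0∞) + 1

/-- The transition probabilities `p_G` of the lazy simple random walk on `G`. -/
def gP (g : Config (X × X)) (x y : X) : ℝ≥0∞ :=
  if (x, y) ∈ g.1 ∨ (x = y ∧ x ∈ gVertices g) then (gC g x)⁻¹ else 0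

/-- The normalizing constant `Z = 𝔼[Σ_{x₀ ∈ V_G ∩ B(o,1)} c_G(x₀)]`. -/
def walkNorm {Ξ : Type*} [MeasurableSpace Ξ] (ℙ : Measure Ξ) (G : Ξ → Config (X × X))
    (o : X) : ℝ≥0∞ :=
  ∫⁻ ξ, ∑' x : X, Set.indicator (gVertices (G ξ) ∩ closedBall o 1) (gC (G ξ)) x ∂ℙ

/-- The weight `c_G(x₀) Π_{i=1}^k p_G(x_{i-1},x_i) Π_{i=-1}^{-k} p_G(x_{i+1},x_i)` of a
trajectory `(x_{-k},…,x_k)`, encoded as `f : Fin (2k+1) → X` with `f j = x_{j-k}`. -/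
def walkWeight (g : Config (X × X)) (k : ℕ) (f : Fin (2 * k + 1) → X) : ℝ≥0∞ :=
  gC g (f ⟨k, by omega⟩) *
    (∏ j : Fin k, gP g (f ⟨k + (j : ℕ), by have := j.isLt; omega⟩)
      (f ⟨k + (j : ℕ) + 1, by have := j.isLt; omega⟩)) *
    (∏ j : Fin k, gP g (f ⟨k - (j : ℕ), by have := j.isLt; omega⟩)
      (f ⟨k - (j : ℕ) - 1, by have := j.isLt; omega⟩))

end RandomWalk

/-!
Reflections in points map any point of a connected `X` to any other, so they give enough isometries
for the isometry group, with the topology of pointwise convergence, to be a locally compact group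
acting transitively on `X` with compact stabilizers; it is moreover unimodular. Let `L` be its Haar
measure and `v` the common value of `L {g | y ∈ B(g 0, 1)}` over `y ∈ X`.

Reversibility of the walk gives `c(x) p(x, y) = c(y) p(y, x)`, so the weight of a trajectory does
not depend on which of its points is taken as time zero. Hence a mass transport identity:
`P̂_a[A, w(1) ∈ B(b, 1)] = P̂_b[sA, w(-1) ∈ B(a, 1)]`. For an invariant set `A`, averaging over the
position of `w(1)` and then of `w(-1)` gives
`v P̂_0[A] = ∫ P̂_0[A, w(1) ∈ B(g 0, 1)] dL(g) = ∫ P̂_{g⁻¹ 0}[A, w(1) ∈ B(0, 1)] dL(g)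
= ∫ P̂_0[sA, w(-1) ∈ B(g⁻¹ 0, 1)] dL(g) = v P̂_0[sA]`,
the last step because `L` is invariant under inversion.
-/

section Reflections

variable {X : Type*} [MetricSpace X] {s t : X ≃ᵢ X} {x y : X}

/-- The isometry `s` is a point reflection around `x`: it moves every point to twice its distance
from `x`. These are the isometries provided by `PointSymmetric`; that `s` fixes `x` is automatic. -/
def IsReflection (s : X ≃ᵢ X) (x : X) : Prop := ∀ y, dist y (s y) = 2 * dist x y

theorem IsReflection.apply_center (hs : IsReflection s x) : s x = x := by
  simpa [eq_comm] using hs x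

theorem IsReflection.inv (hs : IsReflection s x) : IsReflection s⁻¹ x := fun y => by
  rw [← hs y, ← s.dist_eq y, IsometryEquiv.apply_inv_self, dist_comm]

theorem PointSymmetric.exists_isReflection (hX : PointSymmetric X) (x : X) :
    ∃ s : X ≃ᵢ X, IsReflection s x :=
  (hX x).imp fun _ hs => hs.2

theorem IsReflection.two_mul_dist_sub_le (hs : IsReflection s x) (u : X ≃ᵢ X) (a b : X) :
    2 * dist a (u x) - dist a (u b) ≤ dist a (u (s b)) := by
  obtain ⟨c, rfl⟩ := u.surjective a
  simp only [u.dist_eq]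
  have hsc := hs c
  have htriangle := dist_triangle c (s b) (s c)
  rw [s.dist_eq, dist_comm b c] at htriangle
  linarith [dist_comm c x]

theorem IsReflection.nat_mul_le_dist_pow_mul_inv (hs : IsReflection s x) (ht : IsReflection t y)
    (m : ℕ) : m * (2 * dist x y) ≤ dist x (((t * s⁻¹) ^ m) x) := by
  set w := t * s⁻¹
  -- `x, y, w x, w y, w² x, …` is a discrete geodesic: each point is the reflection of the
  -- second to last point around the last one.
  have even_step (m : ℕ) :
      2 * dist x ((w ^ m) y) - dist x ((w ^ m) x) ≤ dist x ((w ^ (m + 1)) x) := by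
    simpa [w, pow_succ, hs.inv.apply_center] using ht.two_mul_dist_sub_le (w ^ m) x x
  have odd_step (m : ℕ) :
      2 * dist x ((w ^ (m + 1)) x) - dist x ((w ^ m) y) ≤ dist x ((w ^ (m + 1)) y) := by
    simpa [w, pow_succ, ht.apply_center] using hs.inv.two_mul_dist_sub_le (w ^ (m + 1)) x (s y)
  have increments (m : ℕ) : dist x ((w ^ m) x) + dist x y ≤ dist x ((w ^ m) y) ∧
      dist x ((w ^ m) y) + dist x y ≤ dist x ((w ^ (m + 1)) x) := by
    induction m with
    | zero => simpa [two_mul] using even_step 0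
    | succ m ih => constructor <;> linarith [even_step (m + 1), odd_step m]
  induction m with
  | zero => simp
  | succ m ih =>
    push_cast
    linarith [increments m]

theorem dist_pow_apply_le_nat_mul (w : X ≃ᵢ X) (p : X) (m : ℕ) :
    dist p ((w ^ m) p) ≤ m * dist p (w p) := by
  induction m with
  | zero => simp
  | succ m ih =>
    have htriangle := dist_triangle p ((w ^ m) p) ((w ^ (m + 1)) p)
    rw [pow_succ, IsometryEquiv.mul_apply, (w ^ m).dist_eq] at htriangle
    rw [pow_succ, IsometryEquiv.mul_apply]
    push_cast
    linarith

-- Every point drifts at the same asymptotic speed under the iterates of `t * s⁻¹`, and the point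
-- `x` drifts at speed at least `2 * dist x y`.
theorem IsReflection.two_mul_dist_le (hs : IsReflection s x) (ht : IsReflection t y) (a : X) :
    2 * dist x y ≤ dist (s a) (t a) := by
  set w := t * s⁻¹ with hw
  have hwa : w (s a) = t a := by simp [hw]
  have drift_le (m : ℕ) : m * (2 * dist x y - dist (s a) (t a)) ≤ 2 * dist x (s a) := by
    have hlower := hs.nat_mul_le_dist_pow_mul_inv ht m
    have hupper := dist_pow_apply_le_nat_mul w (s a) m
    have htriangle := dist_triangle4 x (s a) ((w ^ m) (s a)) ((w ^ m) x)
    rw [(w ^ m).dist_eq, dist_comm (s a) x] at htriangle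
    rw [hwa] at hupper
    linarith
  by_contra! hlt
  obtain ⟨m, hm⟩ := exists_nat_gt (2 * dist x (s a) / (2 * dist x y - dist (s a) (t a)))
  rw [div_lt_iff₀ (by linarith)] at hm
  linarith [drift_le m]

theorem antilipschitzWith_reflection_apply {s : X → X ≃ᵢ X} (hs : ∀ x, IsReflection (s x) x)
    (a : X) : AntilipschitzWith 2⁻¹ fun x => s x a :=
  AntilipschitzWith.of_le_mul_dist fun x y => by
    have := (hs x).two_mul_dist_le (hs y) a
    push_cast
    linarith

end Reflections

section DenseOrbits

variable {X : Type*} [MetricSpace X]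

theorem packingNumber_ne_top_of_isCompact {K : Set X} (hK : IsCompact K) {ε : ℝ≥0} (hε : 0 < ε) :
    packingNumber ε K ≠ ⊤ := by
  obtain ⟨T, -, hTfin, hT⟩ := hK.finite_cover_balls (e := (ε / 2 : ℝ≥0)) (by positivity)
  have hcover : IsCover (ε / 2) K T := isCover_iff_subset_iUnion_closedBall.2 <|
    hT.trans <| iUnion₂_mono fun _ _ => ball_subset_closedBall
  have hle := packingNumber_two_mul_le_externalCoveringNumber (ε / 2) K
  rw [mul_div_cancel₀ _ two_ne_zero] at hle
  exact ((hle.trans hcover.externalCoveringNumber_le_encard).trans_lt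
    (encard_lt_top_iff.2 hTfin)).ne

/-- The orbit of the point `a` under the group `U` of isometries. -/
def isoOrbit (U : Subgroup (X ≃ᵢ X)) (a : X) : Set X := (fun u : X ≃ᵢ X => u a) '' U

variable {U : Subgroup (X ≃ᵢ X)} {a : X}

theorem self_mem_isoOrbit : a ∈ isoOrbit U a := ⟨1, U.one_mem, rfl⟩

theorem apply_mem_isoOrbit {u : X ≃ᵢ X} (hu : u ∈ U) {y : X} (hy : y ∈ isoOrbit U a) :
    u y ∈ isoOrbit U a := by
  obtain ⟨v, hv, rfl⟩ := hy
  exact ⟨u * v, U.mul_mem hu hv, rfl⟩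

theorem infDist_isoOrbit_apply_le {u : X ≃ᵢ X} (hu : u ∈ U) (y : X) :
    infDist (u y) (isoOrbit U a) ≤ infDist y (isoOrbit U a) :=
  (le_infDist ⟨a, self_mem_isoOrbit⟩).2 fun z hz => by
    rw [← u.dist_eq]
    exact infDist_le_dist_of_mem (apply_mem_isoOrbit hu hz)

theorem exists_dist_lt_of_infDist_isoOrbit_lt {y : X} {r : ℝ} (hy : infDist y (isoOrbit U a) < r) :
    ∃ z, dist z a < r ∧ infDist y (isoOrbit U a) ≤ infDist z (isoOrbit U a) := by
  obtain ⟨_, ⟨u, hu, rfl⟩, hyu⟩ := (infDist_lt_iff ⟨a, self_mem_isoOrbit⟩).1 hy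
  obtain ⟨z, rfl⟩ := u.surjective y
  exact ⟨z, by rwa [← u.dist_eq], infDist_isoOrbit_apply_le hu z⟩

-- The map `x ↦ s x a` doubles the distances of a maximal `ρ / 2`-separated set, and a point at
-- distance in `(ρ, 2 * ρ)` from the orbit can be added to its image.
theorem packingNumber_add_one_le [ProperSpace X] (hX : PointSymmetric X)
    (hU : ∀ s x, IsReflection s x → s ∈ U) {ρ : ℝ≥0} {y : X}
    (hρy : ρ < infDist y (isoOrbit U a)) (hyρ : infDist y (isoOrbit U a) < 2 * ρ) :
    packingNumber (ρ / 2) (closedBall a ρ) + 1 ≤ packingNumber ρ (closedBall a (2 * ρ)) := by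
  choose s hs using hX.exists_isReflection
  have hs_anti := antilipschitzWith_reflection_apply hs a
  have hρ : 0 < ρ := by
    rw [← NNReal.coe_pos]
    linarith
  obtain ⟨z, hza, hyz⟩ := exists_dist_lt_of_infDist_isoOrbit_lt hyρ
  obtain ⟨C, hCball, -, hCsep, hCcard⟩ := exists_set_encard_eq_packingNumber <|
    packingNumber_ne_top_of_isCompact (isCompact_closedBall a ρ) (half_pos hρ)
  have image_far (q : X) : ρ < dist z (s q a) := (hρy.trans_le hyz).trans_le <|
    infDist_le_dist_of_mem <| apply_mem_isoOrbit (hU _ _ (hs q)) self_mem_isoOrbit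
  have image_sep : IsSeparated ρ ((fun q => s q a) '' C) := by
    simpa using hCsep.image_antilipschitz hs_anti (by norm_num)
  have insert_sep : IsSeparated ρ (insert z ((fun q => s q a) '' C)) := by
    refine image_sep.insert ?_
    rintro _ ⟨q, -, rfl⟩ -
    rw [edist_nndist, ENNReal.coe_lt_coe, ← NNReal.coe_lt_coe]
    exact image_far q
  have insert_ball : insert z ((fun q => s q a) '' C) ⊆ closedBall a (2 * ρ) := by
    refine insert_subset hza.le (image_subset_iff.2 fun q hq => ?_)
    rw [mem_preimage, mem_closedBall', hs q a]
    linarith [mem_closedBall.1 (hCball hq)]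
  have hz : z ∉ (fun q => s q a) '' C := by
    rintro ⟨q, -, rfl⟩
    simpa using (ρ.coe_nonneg.trans_lt (image_far q))
  calc packingNumber (ρ / 2) (closedBall a ρ) + 1
      = (insert z ((fun q => s q a) '' C)).encard := by
        rw [encard_insert_of_notMem hz, hs_anti.injective.encard_image, hCcard]
    _ ≤ packingNumber ρ (closedBall a (2 * ρ)) := insert_sep.encard_le_packingNumber insert_ball

theorem dense_isoOrbit [ProperSpace X] [PreconnectedSpace X] (hX : PointSymmetric X)
    (hU : ∀ s x, IsReflection s x → s ∈ U) (a : X) : Dense (isoOrbit U a) := by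
  intro z
  by_contra hz
  set O := isoOrbit U a
  have hgap : 0 < infDist z O :=
    (infDist_pos_iff_notMem_closure ⟨a, self_mem_isoOrbit⟩).1 hz
  have infDist_surj (r : ℝ) (hr : 0 ≤ r) (hrz : r ≤ infDist z O) : ∃ y, infDist y O = r :=
    mem_range_of_exists_le_of_exists_ge (continuous_infDist_pt O)
      ⟨a, by rwa [infDist_zero_of_mem self_mem_isoOrbit]⟩ ⟨z, hrz⟩
  have le_packing (n : ℕ) : ∀ ρ : ℝ≥0, 0 < ρ → 2 * ρ ≤ infDist z O →
      n ≤ packingNumber ρ (closedBall a (2 * ρ)) := by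
    induction n with
    | zero => simp
    | succ n ih =>
      intro ρ hρ hρz
      have : (0 : ℝ) < ρ := hρ
      obtain ⟨y, hy⟩ := infDist_surj (3 / 2 * ρ) (by positivity) (by linarith)
      have hstep := packingNumber_add_one_le hX hU (hy ▸ by linarith : (ρ : ℝ) < infDist y O)
        (hy ▸ by linarith)
      have hn := ih (ρ / 2) (half_pos hρ) (by push_cast; linarith)
      rw [NNReal.coe_div, NNReal.coe_two, mul_div_cancel₀ _ two_ne_zero] at hn
      push_cast
      exact (add_le_add_left hn 1).trans hstep
  set ρ : ℝ≥0 := ⟨infDist z O / 2, by positivity⟩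
  have hρ : 0 < ρ := half_pos hgap
  have hρz : 2 * (ρ : ℝ) = infDist z O := mul_div_cancel₀ _ two_ne_zero
  refine packingNumber_ne_top_of_isCompact (isCompact_closedBall a (2 * ρ)) hρ ?_
  exact ENat.eq_top_iff_forall_ge.2 fun n => le_packing n ρ hρ hρz.le

end DenseOrbits

section IsometryGroup

variable {X : Type*} [MetricSpace X]

/-- The pair `(g, g⁻¹)` of self-maps of `X`. It is used to topologize the isometry group so that
inversion is continuous by construction. -/
def isoPair (g : X ≃ᵢ X) : (X → X) × (X → X) := (g, ⇑g⁻¹)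

/-- The topology of pointwise convergence of isometries and their inverses. -/
instance isoTopologicalSpace : TopologicalSpace (X ≃ᵢ X) :=
  TopologicalSpace.induced isoPair inferInstance

theorem isInducing_isoPair : Topology.IsInducing (isoPair : X ≃ᵢ X → _) := ⟨rfl⟩

theorem continuous_iso_apply_const (x : X) : Continuous fun g : X ≃ᵢ X => g x :=
  (continuous_apply x).comp (continuous_fst.comp isInducing_isoPair.continuous)

theorem continuous_iso_apply : Continuous fun p : (X ≃ᵢ X) × X => p.1 p.2 := by
  refine continuous_iff_continuousAt.2 fun ⟨g, x⟩ => ?_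
  have hbound : Continuous fun p : (X ≃ᵢ X) × X => dist p.2 x + dist (p.1 x) (g x) :=
    (continuous_snd.dist continuous_const).add
      (((continuous_iso_apply_const x).comp continuous_fst).dist continuous_const)
  refine tendsto_iff_dist_tendsto_zero.2 <|
    squeeze_zero (fun _ => dist_nonneg) (fun p => ?_) (by simpa using hbound.tendsto (g, x))
  rw [← p.1.dist_eq p.2 x]
  exact dist_triangle _ _ _

theorem continuous_iso_inv : Continuous fun g : X ≃ᵢ X => g⁻¹ :=
  isInducing_isoPair.continuous_iff.2 <| continuous_swap.comp isInducing_isoPair.continuous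

instance isoIsTopologicalGroup : IsTopologicalGroup (X ≃ᵢ X) where
  continuous_inv := continuous_iso_inv
  continuous_mul := by
    refine isInducing_isoPair.continuous_iff.2 <|
      .prodMk (continuous_pi fun x => ?_) (continuous_pi fun x => ?_)
    · exact continuous_iso_apply.comp <| continuous_fst.prodMk <|
        continuous_iso_apply.comp (continuous_snd.prodMk continuous_const)
    · have hinv : (fun p : (X ≃ᵢ X) × (X ≃ᵢ X) => (p.1 * p.2)⁻¹ x) =
          fun p => p.2⁻¹ (p.1⁻¹ x) := by
        funext p
        rw [mul_inv_rev, IsometryEquiv.mul_apply]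
      change Continuous fun p : (X ≃ᵢ X) × (X ≃ᵢ X) => (p.1 * p.2)⁻¹ x
      rw [hinv]
      exact continuous_iso_apply.comp <| (continuous_iso_inv.comp continuous_snd).prodMk <|
        continuous_iso_apply.comp ((continuous_iso_inv.comp continuous_fst).prodMk continuous_const)

theorem range_isoPair :
    range (isoPair : X ≃ᵢ X → _) = {q | ∀ x y, dist (q.1 x) y = dist x (q.2 y)} := by
  ext q
  constructor
  · rintro ⟨g, rfl⟩ x y
    rw [isoPair, ← g.dist_eq x, IsometryEquiv.apply_inv_self]
  · intro hq
    have left_inv (x : X) : q.2 (q.1 x) = x := by simpa [eq_comm] using hq x (q.1 x)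
    have right_inv (x : X) : q.1 (q.2 x) = x := by simpa using hq (q.2 x) x
    exact ⟨⟨⟨q.1, q.2, left_inv, right_inv⟩,
      .of_dist_eq fun x y => (hq x (q.1 y)).trans (by rw [left_inv])⟩, rfl⟩

theorem isClosed_range_isoPair : IsClosed (range (isoPair : X ≃ᵢ X → _)) := by
  simp only [range_isoPair, ofPred_forall]
  exact isClosed_iInter fun x => isClosed_iInter fun y =>
    isClosed_eq (((continuous_apply x).comp continuous_fst).dist continuous_const)
      (continuous_const.dist ((continuous_apply y).comp continuous_snd))

/-- The isometries moving `p` by at most `r`. They form a compact neighbourhood basis of the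
stabilizer of `p` when `X` is proper. -/
def isoBall (p : X) (r : ℝ) : Set (X ≃ᵢ X) := {g | dist (g p) p ≤ r}

variable {p : X} {r : ℝ}

theorem dist_inv_apply_self (g : X ≃ᵢ X) (p : X) : dist (g⁻¹ p) p = dist (g p) p := by
  rw [← g.dist_eq, IsometryEquiv.apply_inv_self, dist_comm]

theorem inv_mem_isoBall {g : X ≃ᵢ X} : g⁻¹ ∈ isoBall p r ↔ g ∈ isoBall p r := by
  rw [isoBall, mem_ofPred_eq, mem_ofPred_eq, dist_inv_apply_self]

theorem dist_apply_le_of_mem_isoBall {g : X ≃ᵢ X} (hg : g ∈ isoBall p r) (x : X) :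
    dist (g x) p ≤ dist x p + r :=
  (dist_triangle _ (g p) _).trans <| by
    rw [g.dist_eq]
    gcongr
    exact hg

theorem isClosed_isoBall (p : X) (r : ℝ) : IsClosed (isoBall p r) :=
  isClosed_le ((continuous_iso_apply_const p).dist continuous_const) continuous_const

theorem isCompact_isoBall [ProperSpace X] (p : X) (r : ℝ) : IsCompact (isoBall p r) := by
  have hbox : IsCompact (univ.pi fun x => closedBall p (dist x p + r)) :=
    isCompact_univ_pi fun x => isCompact_closedBall _ _
  refine (isInducing_isoPair.isCompact_preimage isClosed_range_isoPair
    (hbox.prod hbox)).of_isClosed_subset (isClosed_isoBall p r) fun g hg => ?_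
  exact ⟨fun x _ => dist_apply_le_of_mem_isoBall hg x,
    fun x _ => dist_apply_le_of_mem_isoBall (inv_mem_isoBall.2 hg) x⟩

theorem isoBall_mem_nhds_one (p : X) (hr : 0 < r) : isoBall p r ∈ nhds (1 : X ≃ᵢ X) := by
  have hopen : IsOpen {g : X ≃ᵢ X | dist (g p) p < r} :=
    isOpen_lt ((continuous_iso_apply_const p).dist continuous_const) continuous_const
  refine Filter.mem_of_superset (hopen.mem_nhds (by simpa using hr)) ?_
  exact fun g (hg : dist (g p) p < r) => hg.le

instance isoLocallyCompactSpace [ProperSpace X] : LocallyCompactSpace (X ≃ᵢ X) := by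
  rcases isEmpty_or_nonempty X with hX | ⟨⟨p⟩⟩
  · have : Subsingleton (X ≃ᵢ X) := ⟨fun _ _ => IsometryEquiv.ext hX.elim⟩
    infer_instance
  · exact (isCompact_isoBall p 1).locallyCompactSpace_of_mem_nhds_of_group
      (isoBall_mem_nhds_one p one_pos)

instance isoSigmaCompactSpace [ProperSpace X] : SigmaCompactSpace (X ≃ᵢ X) := by
  rcases isEmpty_or_nonempty X with hX | ⟨⟨p⟩⟩
  · have : Subsingleton (X ≃ᵢ X) := ⟨fun _ _ => IsometryEquiv.ext hX.elim⟩
    infer_instance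
  · refine ⟨⟨fun n : ℕ => isoBall p n, fun n => isCompact_isoBall p n, ?_⟩⟩
    exact eq_univ_iff_forall.2 fun g => mem_iUnion.2 (exists_nat_ge (dist (g p) p))

theorem exists_iso_apply_eq [ProperSpace X] [PreconnectedSpace X] (hX : PointSymmetric X)
    (a z : X) : ∃ g : X ≃ᵢ X, g a = z := by
  have hclosed : IsClosed ((fun g : X ≃ᵢ X => g a) '' isoBall a (dist z a + 1)) :=
    ((isCompact_isoBall a _).image (continuous_iso_apply_const a)).isClosed
  have hz : z ∈ closure ((fun g : X ≃ᵢ X => g a) '' isoBall a (dist z a + 1)) := by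
    refine Metric.mem_closure_iff.2 fun ε hε => ?_
    obtain ⟨_, ⟨u, -, rfl⟩, hu⟩ :=
      (dense_isoOrbit (U := ⊤) hX (fun _ _ _ => trivial) a).exists_dist_lt z (lt_min hε one_pos)
    refine ⟨u a, ⟨u, ?_, rfl⟩, hu.trans_le (min_le_left _ _)⟩
    have htriangle := dist_triangle_left (u a) a z
    have := hu.trans_le (min_le_right _ _)
    change dist (u a) a ≤ _
    linarith
  rw [hclosed.closure_eq] at hz
  exact hz.imp fun g hg => hg.2

end IsometryGroup

section Haar

theorem monoidHom_eq_one_of_forall_le {H : Type*} [Group H] (φ : H →* ℝ≥0) {C : ℝ≥0}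
    (hφ : ∀ g, φ g ≤ C) : φ = 1 := by
  have le_one (g : H) : φ g ≤ 1 := by
    by_contra! hg
    obtain ⟨n, hn⟩ := pow_unbounded_of_one_lt C hg
    exact (hn.trans_le (map_pow φ g n ▸ hφ (g ^ n))).false
  ext g
  have hmul : φ g * φ g⁻¹ = 1 := by rw [← map_mul, mul_inv_cancel, map_one]
  exact_mod_cast le_antisymm (le_one g) (hmul ▸ mul_le_of_le_one_right' (le_one g⁻¹))

variable {X : Type*} [MetricSpace X]

instance isoMeasurableSpace : MeasurableSpace (X ≃ᵢ X) := borel _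

instance isoBorelSpace : BorelSpace (X ≃ᵢ X) := ⟨rfl⟩

variable (L : Measure (X ≃ᵢ X)) [L.IsHaarMeasure]

theorem measure_isoBall_ne_zero (p : X) {r : ℝ} (hr : 0 < r) : L (isoBall p r) ≠ 0 :=
  (Measure.measure_pos_of_mem_nhds L (isoBall_mem_nhds_one p hr)).ne'

variable [ProperSpace X]

theorem measure_isoBall_ne_top (p : X) (r : ℝ) : L (isoBall p r) ≠ ⊤ :=
  (isCompact_isoBall p r).measure_lt_top.ne

theorem measure_dist_apply_le_one [PreconnectedSpace X] (hX : PointSymmetric X) (o y : X) :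
    L {g | dist y (g o) ≤ 1} = L (isoBall o 1) := by
  obtain ⟨k, rfl⟩ := exists_iso_apply_eq hX o y
  have hpre : {g : X ≃ᵢ X | dist (k o) (g o) ≤ 1} = (fun g => k⁻¹ * g) ⁻¹' isoBall o 1 := by
    ext g
    rw [isoBall, mem_preimage, mem_ofPred_eq, mem_ofPred_eq, IsometryEquiv.mul_apply,
      ← k.dist_eq (k⁻¹ (g o)), IsometryEquiv.apply_inv_self, dist_comm]
  rw [hpre, measure_preimage_mul]

variable [L.InnerRegular]

theorem measure_preimage_mul_right_isoBall (g : X ≃ᵢ X) (p : X) (r : ℝ) :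
    L ((fun k => k * g) ⁻¹' isoBall p r) = Measure.modularCharacter g * L (isoBall p r) := by
  rw [← Measure.map_apply (measurable_mul_const g) (isClosed_isoBall p r).measurableSet,
    Measure.map_right_mul_eq_modularCharacterFun_smul L g]
  rfl

theorem modularCharacter_eq_one_of_apply_eq {g : X ≃ᵢ X} {x : X} (hg : g x = x) :
    Measure.modularCharacter g = 1 := by
  have hpre : (fun k => k * g) ⁻¹' isoBall x 1 = isoBall x 1 := by
    ext k
    simp only [isoBall, mem_preimage, mem_ofPred_eq, IsometryEquiv.mul_apply, hg]
  have hscale := measure_preimage_mul_right_isoBall Measure.haar g x 1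
  rw [hpre, eq_comm, ENNReal.mul_eq_right (measure_isoBall_ne_zero _ x one_pos)
    (measure_isoBall_ne_top _ x 1)] at hscale
  exact_mod_cast hscale

theorem modularCharacter_mul_measure_isoBall_le {g : X ≃ᵢ X} {p : X} (hg : dist (g p) p ≤ 1) :
    Measure.modularCharacter g * L (isoBall p 1) ≤ L (isoBall p 2) := by
  rw [← measure_preimage_mul_right_isoBall]
  refine measure_mono fun k (hk : dist (k (g p)) p ≤ 1) => show dist (k p) p ≤ 2 from ?_
  have htriangle := dist_triangle_left (k p) p (k (g p))
  rw [k.dist_eq] at htriangle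
  linarith

-- The kernel of the modular character contains all reflections, so its orbits are dense. Hence
-- every value of the character is attained in the compact set `isoBall o 1`.
theorem modularCharacter_eq_one [PreconnectedSpace X] [Nonempty X] (hX : PointSymmetric X) :
    (Measure.modularCharacter : (X ≃ᵢ X) →* ℝ≥0) = 1 := by
  obtain ⟨o⟩ := ‹Nonempty X›
  set L : Measure (X ≃ᵢ X) := Measure.haar
  set Δ : (X ≃ᵢ X) →* ℝ≥0 := Measure.modularCharacter
  have hdense : Dense (isoOrbit Δ.ker o) := dense_isoOrbit hX
    (fun s x hs => MonoidHom.mem_ker.2 (modularCharacter_eq_one_of_apply_eq hs.apply_center)) o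
  refine monoidHom_eq_one_of_forall_le Δ (C := (L (isoBall o 2) / L (isoBall o 1)).toNNReal)
    fun g => ?_
  obtain ⟨_, ⟨u, hu, rfl⟩, hug⟩ := hdense.exists_dist_lt (g o) one_pos
  have hΔ : Δ (u⁻¹ * g) = Δ g := by rw [map_mul, Δ.ker.inv_mem hu, one_mul]
  have hclose : dist ((u⁻¹ * g) o) o ≤ 1 := by
    rw [IsometryEquiv.mul_apply, ← u.dist_eq, IsometryEquiv.apply_inv_self]
    exact hug.le
  have hL : L (isoBall o 2) / L (isoBall o 1) ≠ ⊤ := ENNReal.div_ne_top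
    (measure_isoBall_ne_top L o 2) (measure_isoBall_ne_zero L o one_pos)
  rw [← hΔ, ← ENNReal.coe_le_coe, ENNReal.coe_toNNReal hL, ENNReal.le_div_iff_mul_le
    (.inl (measure_isoBall_ne_zero L o one_pos)) (.inl (measure_isoBall_ne_top L o 1))]
  exact modularCharacter_mul_measure_isoBall_le L hclose

theorem isMulRightInvariant_of_pointSymmetric [PreconnectedSpace X] [Nonempty X]
    (hX : PointSymmetric X) : L.IsMulRightInvariant where
  map_mul_right_eq_self g := by
    have hg : Measure.modularCharacterFun g = 1 := DFunLike.congr_fun (modularCharacter_eq_one hX) g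
    rw [Measure.map_right_mul_eq_modularCharacterFun_smul L g, hg, one_smul]

theorem isInvInvariant_of_pointSymmetric [PreconnectedSpace X] [Nonempty X]
    (hX : PointSymmetric X) : L.IsInvInvariant := by
  obtain ⟨o⟩ := ‹Nonempty X›
  have := isMulRightInvariant_of_pointSymmetric L hX
  have hsmul := Measure.isMulLeftInvariant_eq_smul_of_innerRegular L.inv L
  have hball : L.inv (isoBall o 1) = L (isoBall o 1) := by
    rw [Measure.inv_apply]
    congr 1
    ext g
    exact inv_mem_isoBall
  have hfactor : (Measure.haarScalarFactor L.inv L : ℝ≥0∞) = 1 := by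
    rw [hsmul] at hball
    exact (ENNReal.mul_eq_right (measure_isoBall_ne_zero L o one_pos)
      (measure_isoBall_ne_top L o 1)).1 hball
  exact ⟨by rw [hsmul, ENNReal.coe_eq_one.1 hfactor, one_smul]⟩

end Haar

section PathSums

variable {X : Type*} [MetricSpace X]

/-- The configuration `g` on `X²` represents an unoriented graph. -/
def IsUndirected (g : Config (X × X)) : Prop := ∀ x y, (x, y) ∈ g.1 ↔ (y, x) ∈ g.1

/-- The total mass of the transition probabilities out of `x`. It falls short of `1` at a vertex
carrying a loop, because `gC` counts the loop in addition to the lazy step. -/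
def outProb (g : Config (X × X)) (x : X) : ℝ≥0∞ := ∑' y, gP g x y

/-- The weight of a path `f 0, …, f n` of the stationary walk, read from its starting point. -/
def pathWeight (g : Config (X × X)) {n : ℕ} (f : Fin (n + 1) → X) : ℝ≥0∞ :=
  gC g (f 0) * ∏ j : Fin n, gP g (f j.castSucc) (f j.succ)

/-- The total weight of the paths whose `j`-th point lies in `C j`. -/
def pathSum (g : Config (X × X)) {n : ℕ} (C : Fin (n + 1) → Set X) : ℝ≥0∞ :=
  ∑' f, (univ.pi C).indicator (pathWeight g) f

variable {g : Config (X × X)} {x y : X}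

theorem gC_ne_zero : gC g x ≠ 0 := by simp [gC]

theorem gP_eq_zero_of_notMem (hs : IsUndirected g) (hy : y ∉ gVertices g) : gP g x y = 0 := by
  rw [gP, if_neg]
  rintro (h | ⟨rfl, h⟩)
  · exact hy ⟨x, (hs _ _).1 h⟩
  · exact hy h

open scoped Classical in
theorem gC_mul_gP (hx : gC g x ≠ ⊤) :
    gC g x * gP g x y = if (x, y) ∈ g.1 ∨ (x = y ∧ x ∈ gVertices g) then 1 else 0 := by
  rw [gP, mul_ite, mul_zero, ENNReal.mul_inv_cancel gC_ne_zero hx]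

theorem gC_mul_gP_comm (hs : IsUndirected g) (hx : gC g x ≠ ⊤) (hy : gC g y ≠ ⊤) :
    gC g x * gP g x y = gC g y * gP g y x := by
  classical
  rw [gC_mul_gP hx, gC_mul_gP hy]
  refine if_congr ?_ rfl rfl
  rw [hs x y]
  refine or_congr_right ⟨?_, ?_⟩ <;> rintro ⟨rfl, h⟩ <;> exact ⟨rfl, h⟩

theorem gC_mul_outProb (hx : gC g x ≠ ⊤) (hxV : x ∈ gVertices g) :
    gC g x * outProb g x = ((insert x {y | (x, y) ∈ g.1}).encard : ℝ≥0∞) := by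
  classical
  rw [outProb, ← ENNReal.tsum_mul_left, ← ENNReal.tsum_set_one,
    tsum_subtype (insert x {y | (x, y) ∈ g.1}) (fun _ => (1 : ℝ≥0∞))]
  refine tsum_congr fun y => ?_
  rw [gC_mul_gP hx, indicator_apply]
  refine if_congr ?_ rfl rfl
  rw [mem_insert_iff, mem_ofPred_eq, or_comm, eq_comm (a := x), and_iff_left hxV]

open scoped Classical in
theorem gC_mul_outProb_add_loop_le (hx : gC g x ≠ ⊤) (hxV : x ∈ gVertices g) :
    gC g x * outProb g x + (if (x, x) ∈ g.1 then 1 else 0) ≤ gC g x := by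
  rw [gC_mul_outProb hx hxV]
  split_ifs with hloop
  · rw [insert_eq_of_mem (by exact hloop), gC]
  · rw [add_zero, gC]
    exact_mod_cast ENat.toENNReal_le.2 (encard_insert_le {y | (x, y) ∈ g.1} x)

theorem outProb_le_one (hx : gC g x ≠ ⊤) (hxV : x ∈ gVertices g) : outProb g x ≤ 1 := by
  rw [← ENNReal.mul_le_mul_iff_right gC_ne_zero hx, mul_one]
  exact le_self_add.trans (gC_mul_outProb_add_loop_le hx hxV)

theorem outProb_eq_one (hx : gC g x ≠ ⊤) (hxV : x ∈ gVertices g) (hloop : (x, x) ∉ g.1) :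
    outProb g x = 1 := by
  rw [← ENNReal.mul_right_inj gC_ne_zero hx, gC_mul_outProb hx hxV, mul_one, gC,
    encard_insert_of_notMem (by exact hloop)]
  norm_cast

variable {n : ℕ}

theorem pathWeight_snoc (f : Fin (n + 1) → X) (y : X) :
    pathWeight g (Fin.snoc f y : Fin (n + 2) → X) =
      gP g (f (Fin.last n)) y * pathWeight g f := by
  have hzero : (Fin.snoc f y : Fin (n + 2) → X) 0 = f 0 := by
    rw [← Fin.castSucc_zero, Fin.snoc_castSucc]
  rw [pathWeight, pathWeight, Fin.prod_univ_castSucc, hzero]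
  simp only [Fin.snoc_castSucc, Fin.succ_castSucc, Fin.succ_last, Fin.snoc_last]
  ring

theorem pathWeight_cons (hs : IsUndirected g) (hf : ∀ x, gC g x ≠ ⊤) (f : Fin (n + 1) → X)
    (y : X) :
    pathWeight g (Fin.cons y f : Fin (n + 2) → X) = gP g (f 0) y * pathWeight g f := by
  rw [pathWeight, pathWeight, Fin.prod_univ_succ]
  simp only [Fin.cons_zero, Fin.castSucc_zero, Fin.cons_succ, ← Fin.succ_castSucc]
  rw [← mul_assoc, gC_mul_gP_comm hs (hf y) (hf (f 0))]
  ring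

theorem pathSum_snoc_gVertices_eq_tsum (hs : IsUndirected g) (C : Fin (n + 1) → Set X) :
    pathSum g (Fin.snoc C (gVertices g) : Fin (n + 2) → Set X) =
      ∑' f, (univ.pi C).indicator (fun f => outProb g (f (Fin.last n)) * pathWeight g f) f := by
  classical
  rw [pathSum, ← (Fin.snocEquiv (fun _ : Fin (n + 2) => X)).tsum_eq, ENNReal.tsum_prod',
    ENNReal.tsum_comm]
  refine tsum_congr fun f => ?_
  have hmem (y : X) : (Fin.snoc f y : Fin (n + 2) → X) ∈ univ.pi (Fin.snoc C (gVertices g)) ↔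
      f ∈ univ.pi C ∧ y ∈ gVertices g := by
    simp only [mem_univ_pi, Fin.forall_fin_succ', Fin.snoc_castSucc, Fin.snoc_last]
  change ∑' y, indicator _ _ (Fin.snoc f y : Fin (n + 2) → X) = _
  by_cases hf : f ∈ univ.pi C
  · rw [indicator_of_mem hf, outProb, ← ENNReal.tsum_mul_right]
    refine tsum_congr fun y => ?_
    rw [indicator_apply, hmem, pathWeight_snoc]
    split_ifs with hy
    · rfl
    · rw [gP_eq_zero_of_notMem hs fun h => hy ⟨hf, h⟩, zero_mul]
  · simp [hmem, hf]

theorem pathSum_cons_gVertices_eq_tsum (hs : IsUndirected g) (hfin : ∀ x, gC g x ≠ ⊤)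
    (C : Fin (n + 1) → Set X) :
    pathSum g (Fin.cons (gVertices g) C : Fin (n + 2) → Set X) =
      ∑' f, (univ.pi C).indicator (fun f => outProb g (f 0) * pathWeight g f) f := by
  classical
  rw [pathSum, ← (Fin.consEquiv (fun _ : Fin (n + 2) => X)).tsum_eq, ENNReal.tsum_prod',
    ENNReal.tsum_comm]
  refine tsum_congr fun f => ?_
  have hmem (y : X) : (Fin.cons y f : Fin (n + 2) → X) ∈ univ.pi (Fin.cons (gVertices g) C) ↔
      y ∈ gVertices g ∧ f ∈ univ.pi C := by
    simp only [mem_univ_pi, Fin.forall_fin_succ, Fin.cons_zero, Fin.cons_succ]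
  change ∑' y, indicator _ _ (Fin.cons y f : Fin (n + 2) → X) = _
  by_cases hf : f ∈ univ.pi C
  · rw [indicator_of_mem hf, outProb, ← ENNReal.tsum_mul_right]
    refine tsum_congr fun y => ?_
    rw [indicator_apply, hmem, pathWeight_cons hs hfin]
    split_ifs with hy
    · rfl
    · rw [gP_eq_zero_of_notMem hs fun h => hy ⟨h, hf⟩, zero_mul]
  · simp [hmem, hf]

theorem pathSum_cons_gVertices_le (hs : IsUndirected g) (hfin : ∀ x, gC g x ≠ ⊤)
    {C : Fin (n + 1) → Set X} (hC : C 0 ⊆ gVertices g) :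
    pathSum g (Fin.cons (gVertices g) C : Fin (n + 2) → Set X) ≤ pathSum g C := by
  rw [pathSum_cons_gVertices_eq_tsum hs hfin]
  refine ENNReal.tsum_le_tsum fun f => indicator_le_indicator' fun hf => ?_
  exact mul_le_of_le_one_left' (outProb_le_one (hfin _) (hC (hf 0 trivial)))

theorem pathSum_cons_gVertices (hs : IsUndirected g) (hfin : ∀ x, gC g x ≠ ⊤)
    (hloop : ∀ x, (x, x) ∉ g.1) {C : Fin (n + 1) → Set X} (hC : C 0 ⊆ gVertices g) :
    pathSum g (Fin.cons (gVertices g) C : Fin (n + 2) → Set X) = pathSum g C := by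
  rw [pathSum_cons_gVertices_eq_tsum hs hfin, pathSum]
  refine tsum_congr (congrFun (indicator_congr fun f hf => ?_))
  simp only [outProb_eq_one (hfin _) (hC (hf 0 trivial)) (hloop _), one_mul]

theorem pathSum_snoc_gVertices (hs : IsUndirected g) (hfin : ∀ x, gC g x ≠ ⊤)
    (hloop : ∀ x, (x, x) ∉ g.1) {C : Fin (n + 1) → Set X}
    (hC : C (Fin.last n) ⊆ gVertices g) :
    pathSum g (Fin.snoc C (gVertices g) : Fin (n + 2) → Set X) = pathSum g C := by
  rw [pathSum_snoc_gVertices_eq_tsum hs, pathSum]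
  refine tsum_congr (congrFun (indicator_congr fun f hf => ?_))
  simp only [outProb_eq_one (hfin _) (hC (hf _ trivial)) (hloop _), one_mul]

theorem pathSum_fin_one (C : Set X) :
    pathSum g (fun _ : Fin 1 => C) = ∑' x, C.indicator (gC g) x := by
  classical
  rw [← (Equiv.funUnique (Fin 1) X).tsum_eq, pathSum]
  refine tsum_congr fun f => ?_
  simp [indicator_apply, pathWeight, Fin.forall_fin_one]

theorem gC_mul_prod_gP_reverse (hs : IsUndirected g) (hfin : ∀ x, gC g x ≠ ⊤) (F : ℕ → X) (m : ℕ) :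
    gC g (F m) * ∏ j ∈ Finset.range m, gP g (F (m - j)) (F (m - j - 1)) =
      gC g (F 0) * ∏ j ∈ Finset.range m, gP g (F j) (F (j + 1)) := by
  induction m with
  | zero => simp
  | succ m ih =>
    rw [Finset.prod_range_succ', Finset.prod_range_succ _ m, ← mul_assoc (gC g (F 0)), ← ih]
    simp only [Nat.add_sub_add_right, Nat.add_sub_cancel, Nat.sub_zero]
    rw [mul_comm (∏ k ∈ Finset.range m, _), ← mul_assoc, gC_mul_gP_comm hs (hfin _) (hfin _)]
    ring

theorem walkWeight_eq_pathWeight (hs : IsUndirected g) (hfin : ∀ x, gC g x ≠ ⊤) (k : ℕ)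
    (f : Fin (2 * k + 1) → X) : walkWeight g k f = pathWeight g f := by
  obtain ⟨F, hF⟩ : ∃ F : ℕ → X, ∀ m (h : m < 2 * k + 1), f ⟨m, h⟩ = F m :=
    ⟨fun m => if h : m < 2 * k + 1 then f ⟨m, h⟩ else f 0, fun m h => by simp only [dif_pos h]⟩
  have hwalk : walkWeight g k f = gC g (F k) *
      (∏ j ∈ Finset.range k, gP g (F (k + j)) (F (k + j + 1))) *
      (∏ j ∈ Finset.range k, gP g (F (k - j)) (F (k - j - 1))) := by
    simp only [walkWeight, hF, Finset.prod_range]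
  have hpath : pathWeight g f =
      gC g (F 0) * ∏ j ∈ Finset.range (2 * k), gP g (F j) (F (j + 1)) := by
    rw [Finset.prod_range, pathWeight, ← hF 0 (by omega)]
    refine congrArg _ (Finset.prod_congr rfl fun j _ => ?_)
    rw [← hF j (by omega), ← hF (j + 1) (by omega)]
    rfl
  rw [hwalk, hpath, mul_right_comm, gC_mul_prod_gP_reverse hs hfin, two_mul,
    Finset.prod_range_add, mul_assoc]

end PathSums

section WalkSums

variable {X : Type*} [MetricSpace X]

open scoped Classical in
/-- The sum over the trajectories `(x_{-k}, …, x_k) ∈ V*` in the definition of `P̂_x`. -/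
def walkSum (g : Config (X × X)) (x : X) (k : ℕ) (B : ℤ → Set X) : ℝ≥0∞ :=
  ∑' f : Fin (2 * k + 1) → X,
    (if (∀ j : Fin (2 * k + 1), f j ∈ gVertices g ∧ f j ∈ B ((j : ℤ) - k)) ∧
        f ⟨k, by omega⟩ ∈ closedBall x 1
      then walkWeight g k f else 0)

/-- The total weight of the paths `(x_{-k}, …, x_k)` in the vertex set with `x_i ∈ D i`. -/
def windowSum (g : Config (X × X)) (k : ℕ) (D : ℤ → Set X) : ℝ≥0∞ :=
  pathSum g fun j : Fin (2 * k + 1) => gVertices g ∩ D ((j : ℤ) - k)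

/-- The condition `w(i₀) ∈ B(x, 1)` on a trajectory `w`, as a family of conditions on each of its
points. -/
def pinned (i₀ : ℤ) (x : X) (i : ℤ) : Set X := {y | i = i₀ → y ∈ closedBall x 1}

theorem pinned_self (i : ℤ) (x : X) : pinned i x i = closedBall x 1 :=
  ext fun _ => imp_iff_right rfl

theorem pinned_of_ne {i i₀ : ℤ} (h : i ≠ i₀) (x : X) : pinned i₀ x i = univ := by
  simp [pinned, h]

theorem pinned_sub_one (i₀ i : ℤ) (x : X) : pinned i₀ x (i - 1) = pinned (i₀ + 1) x i := by
  simp only [pinned, sub_eq_iff_eq_add]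

theorem univ_pi_prod_inter_mem_closedBall {Ξ : Type*} (B : ℤ → Set X) (A : Set Ξ) (i : ℤ) (x : X) :
    univ.pi B ×ˢ A ∩ {p | p.1 i ∈ closedBall x 1} =
      univ.pi (fun j => B j ∩ pinned i x j) ×ˢ A := by
  have hpinned : univ.pi (pinned i x) = {w | w i ∈ closedBall x 1} := by
    ext w
    simp [pinned]
  rw [pi_inter_distrib, hpinned]
  ext p
  exact and_right_comm

theorem measurableSet_pinned [MeasurableSpace X] [BorelSpace X] (i₀ : ℤ) (x : X) (i : ℤ) :
    MeasurableSet (pinned i₀ x i) := by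
  rcases eq_or_ne i i₀ with rfl | hi
  · exact pinned_self i x ▸ measurableSet_closedBall
  · exact pinned_of_ne hi x ▸ MeasurableSet.univ

variable {g : Config (X × X)}

theorem walkSum_eq_windowSum (hs : IsUndirected g) (hfin : ∀ x, gC g x ≠ ⊤) (x : X) (k : ℕ)
    (B : ℤ → Set X) : walkSum g x k B = windowSum g k fun i => B i ∩ pinned 0 x i := by
  classical
  refine tsum_congr fun f => ?_
  rw [indicator_apply, walkWeight_eq_pathWeight hs hfin]
  refine if_congr ?_ rfl rfl
  have hcentre : f ⟨k, by omega⟩ ∈ closedBall x 1 ↔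
      ∀ j : Fin (2 * k + 1), f j ∈ pinned 0 x ((j : ℤ) - k) := by
    refine ⟨fun h j hj => ?_, fun h => h ⟨k, by omega⟩ (sub_self _)⟩
    rwa [show j = ⟨k, by omega⟩ from Fin.ext (Int.ofNat.inj (sub_eq_zero.1 hj))]
  simp only [hcentre, mem_univ_pi, mem_inter_iff, forall_and, and_assoc]

theorem windowSum_shift (hs : IsUndirected g) (hfin : ∀ x, gC g x ≠ ⊤)
    (hloop : ∀ x, (x, x) ∉ g.1) {k : ℕ} {D : ℤ → Set X} (hfirst : D (-(k + 2)) = univ)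
    (hlast : D (k + 1) = univ) :
    windowSum g (k + 1) (fun i => D (i - 1)) = windowSum g (k + 1) D := by
  let C (j : Fin (2 * k + 2)) : Set X := gVertices g ∩ D ((j : ℤ) - (k + 1))
  have hcons : (fun j : Fin (2 * k + 3) => gVertices g ∩ D ((j : ℤ) - ((k + 1 : ℕ) : ℤ) - 1)) =
      Fin.cons (gVertices g) C := by
    refine funext (Fin.cases ?_ fun j => ?_)
    · rw [Fin.cons_zero, show (((0 : Fin (2 * k + 3)) : ℕ) : ℤ) - ((k + 1 : ℕ) : ℤ) - 1 =
        -(k + 2) by rw [Fin.val_zero]; push_cast; ring, hfirst, inter_univ]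
    · rw [Fin.cons_succ, show ((j.succ : ℕ) : ℤ) - ((k + 1 : ℕ) : ℤ) - 1 = j - (k + 1) by
        rw [Fin.val_succ]; push_cast; ring]
  have hsnoc : (fun j : Fin (2 * k + 3) => gVertices g ∩ D ((j : ℤ) - ((k + 1 : ℕ) : ℤ))) =
      Fin.snoc C (gVertices g) := by
    refine funext (Fin.lastCases ?_ fun j => ?_)
    · rw [Fin.snoc_last, show ((Fin.last (2 * k + 2) : ℕ) : ℤ) - ((k + 1 : ℕ) : ℤ) = k + 1 by
        push_cast [Fin.val_last]; ring, hlast, inter_univ]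
    · rw [Fin.snoc_castSucc, Fin.val_castSucc, Nat.cast_succ]
  calc windowSum g (k + 1) (fun i => D (i - 1)) = pathSum g (Fin.cons (gVertices g) C) :=
        congrArg (pathSum g) hcons
    _ = pathSum g C := pathSum_cons_gVertices hs hfin hloop inter_subset_left
    _ = pathSum g (Fin.snoc C (gVertices g)) :=
        (pathSum_snoc_gVertices hs hfin hloop inter_subset_left).symm
    _ = windowSum g (k + 1) D := (congrArg (pathSum g) hsnoc).symm

theorem walkSum_shift (hs : IsUndirected g) (hfin : ∀ x, gC g x ≠ ⊤)
    (hloop : ∀ x, (x, x) ∉ g.1) {k : ℕ} {B : ℤ → Set X} (hB : ∀ i, (k : ℤ) < |i| → B i = univ)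
    (a b : X) :
    walkSum g a (k + 1) (fun i => B (i - 1) ∩ pinned 1 b i) =
      walkSum g b (k + 1) (fun i => B i ∩ pinned (-1) a i) := by
  let D (i : ℤ) : Set X := B i ∩ pinned (-1) a i ∩ pinned 0 b i
  have hD {i : ℤ} (hi : (k : ℤ) < |i|) (hi' : i ≠ -1) (hi₀ : i ≠ 0) : D i = univ := by
    rw [show D i = B i ∩ pinned (-1) a i ∩ pinned 0 b i from rfl, hB i hi, pinned_of_ne hi',
      pinned_of_ne hi₀, inter_univ, inter_univ]
  rw [walkSum_eq_windowSum hs hfin, walkSum_eq_windowSum hs hfin, ← windowSum_shift hs hfin hloop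
    (hD (by grind) (by omega) (by omega)) (hD (by grind) (by omega) (by omega))]
  congr 1 with i : 1
  change _ = B (i - 1) ∩ pinned (-1) a (i - 1) ∩ pinned 0 b (i - 1)
  rw [pinned_sub_one, pinned_sub_one, neg_add_cancel, zero_add, inter_right_comm]

theorem walkSum_zero_univ (x : X) :
    walkSum g x 0 (fun _ => univ) =
      ∑' y, (gVertices g ∩ closedBall x 1).indicator (gC g) y := by
  classical
  rw [← pathSum_fin_one]
  refine tsum_congr fun f => ?_
  simp [walkWeight, pathWeight, indicator_apply, Fin.forall_fin_one]

theorem walkSum_one_univ_le (hs : IsUndirected g) (hfin : ∀ x, gC g x ≠ ⊤) (x : X) :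
    walkSum g x 1 (fun _ => univ) ≤
      ∑' y, (gVertices g ∩ closedBall x 1).indicator (fun y => gC g y * outProb g y) y := by
  classical
  let C (_ : Fin 1) : Set X := gVertices g ∩ closedBall x 1
  let E : Fin 2 → Set X := Fin.snoc C (gVertices g)
  have hE : (fun j : Fin 3 => gVertices g ∩ (univ ∩ pinned 0 x ((j : ℤ) - (1 : ℕ)))) =
      Fin.cons (gVertices g) E := by
    funext j
    fin_cases j
    · change gVertices g ∩ (univ ∩ pinned 0 x (-1)) = gVertices g
      rw [pinned_of_ne (by decide), univ_inter, inter_univ]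
    · change gVertices g ∩ (univ ∩ pinned 0 x 0) = gVertices g ∩ closedBall x 1
      rw [pinned_self, univ_inter]
    · change gVertices g ∩ (univ ∩ pinned 0 x 1) = gVertices g
      rw [pinned_of_ne one_ne_zero, univ_inter, inter_univ]
  calc walkSum g x 1 (fun _ => univ) = pathSum g (Fin.cons (gVertices g) E) :=
        (walkSum_eq_windowSum hs hfin x 1 _).trans (congrArg (pathSum g) hE)
    _ ≤ pathSum g E := pathSum_cons_gVertices_le hs hfin inter_subset_left
    _ = ∑' f, (univ.pi C).indicator (fun f => outProb g (f 0) * pathWeight g f) f :=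
        pathSum_snoc_gVertices_eq_tsum hs C
    _ = _ := by
        rw [← (Equiv.funUnique (Fin 1) X).tsum_eq]
        refine tsum_congr fun f => ?_
        simp [indicator_apply, pathWeight, Fin.forall_fin_one, C, mul_comm (gC g _)]

theorem walkSum_one_add_loops_le (hs : IsUndirected g) (hfin : ∀ x, gC g x ≠ ⊤) (x : X) :
    walkSum g x 1 (fun _ => univ) +
        ((g.1 ∩ (diagonal X ∩ closedBall x 1 ×ˢ univ)).encard : ℝ≥0∞) ≤
      walkSum g x 0 (fun _ => univ) := by
  classical
  have hloops : g.1 ∩ (diagonal X ∩ closedBall x 1 ×ˢ univ) =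
      (fun y => (y, y)) '' {y | (y, y) ∈ g.1 ∧ y ∈ closedBall x 1} := by
    ext ⟨y, z⟩
    simp only [mem_inter_iff, mem_diagonal_iff, mem_prod, mem_univ, and_true, mem_image,
      mem_ofPred_eq, Prod.mk.injEq]
    constructor
    · rintro ⟨hyz, rfl, hy⟩
      exact ⟨y, ⟨hyz, hy⟩, rfl, rfl⟩
    · rintro ⟨_, ⟨hyy, hy⟩, rfl, rfl⟩
      exact ⟨hyy, rfl, hy⟩
  have hinj : Injective fun y : X => (y, y) := fun _ _ h => congrArg Prod.fst h
  rw [hloops, hinj.encard_image, ← ENNReal.tsum_set_one,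
    tsum_subtype {y | (y, y) ∈ g.1 ∧ y ∈ closedBall x 1} (fun _ => (1 : ℝ≥0∞)), walkSum_zero_univ]
  refine (add_le_add_left (walkSum_one_univ_le hs hfin x) _).trans ?_
  rw [← ENNReal.tsum_add]
  refine ENNReal.tsum_le_tsum fun y => ?_
  by_cases hy : y ∈ gVertices g ∩ closedBall x 1
  · have := gC_mul_outProb_add_loop_le (hfin y) hy.1
    simpa [indicator_apply, hy.1, mem_closedBall.1 hy.2] using this
  · have hloop : y ∉ {y | (y, y) ∈ g.1 ∧ y ∈ closedBall x 1} := fun h => hy ⟨⟨y, h.1⟩, h.2⟩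
    rw [indicator_of_notMem hy, indicator_of_notMem hy, indicator_of_notMem hloop, add_zero]

theorem encard_le_walkSum_zero_univ (x : X) :
    ((g.1 ∩ closedBall x 1 ×ˢ univ).encard : ℝ≥0∞) ≤ walkSum g x 0 (fun _ => univ) := by
  rw [walkSum_zero_univ, ← ENNReal.tsum_set_one,
    tsum_subtype (g.1 ∩ closedBall x 1 ×ˢ univ) (fun _ => (1 : ℝ≥0∞)), ENNReal.tsum_prod']
  refine ENNReal.tsum_le_tsum fun y => ?_
  by_cases hy : y ∈ gVertices g ∩ closedBall x 1
  · rw [indicator_of_mem hy, gC, ← ENNReal.tsum_set_one,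
      tsum_subtype {z | (y, z) ∈ g.1} (fun _ => (1 : ℝ≥0∞))]
    refine le_self_add.trans' (ENNReal.tsum_le_tsum fun z => ?_)
    exact indicator_le_indicator_of_subset (s := {z | (y, z) ∈ g.1 ∩ closedBall x 1 ×ˢ univ})
      (f := fun _ => (1 : ℝ≥0∞)) (fun z hz => hz.1) (fun _ => zero_le_one) z
  · refine le_of_eq_of_le (ENNReal.tsum_eq_zero.2 fun z => indicator_of_notMem ?_ _) zero_le
    exact fun hz => hy ⟨⟨z, hz.1⟩, hz.2.1⟩

end WalkSums

section Equivariance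

variable {X : Type*} [MetricSpace X] {g g' : Config (X × X)} {γ : X ≃ᵢ X}

theorem mk_apply_mem_iff (h : g'.1 = (fun q : X × X => (γ q.1, γ q.2)) '' g.1) (x y : X) :
    (γ x, γ y) ∈ g'.1 ↔ (x, y) ∈ g.1 := by
  rw [h]
  exact (γ.injective.prodMap γ.injective).mem_set_image (a := (x, y))

theorem apply_mem_gVertices_iff (h : g'.1 = (fun q : X × X => (γ q.1, γ q.2)) '' g.1) (x : X) :
    γ x ∈ gVertices g' ↔ x ∈ gVertices g := by
  rw [gVertices, mem_ofPred_eq, γ.surjective.exists]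
  exact exists_congr fun y => mk_apply_mem_iff h x y

theorem gC_apply (h : g'.1 = (fun q : X × X => (γ q.1, γ q.2)) '' g.1) (x : X) :
    gC g' (γ x) = gC g x := by
  have hnbrs : γ ⁻¹' {y | (γ x, y) ∈ g'.1} = {y | (x, y) ∈ g.1} := by
    ext y
    exact mk_apply_mem_iff h x y
  rw [gC, gC, ← hnbrs, encard_preimage_of_injective_subset_range γ.injective (by simp)]

theorem gP_apply (h : g'.1 = (fun q : X × X => (γ q.1, γ q.2)) '' g.1) (x y : X) :
    gP g' (γ x) (γ y) = gP g x y := by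
  classical
  simp only [gP, gC_apply h, mk_apply_mem_iff h, apply_mem_gVertices_iff h,
    EmbeddingLike.apply_eq_iff_eq]

theorem walkSum_apply (h : g'.1 = (fun q : X × X => (γ q.1, γ q.2)) '' g.1) (x : X) (k : ℕ)
    (B : ℤ → Set X) :
    walkSum g' (γ x) k B = walkSum g x k (fun i => γ ⁻¹' B i) := by
  classical
  rw [walkSum, ← (Equiv.arrowCongr (Equiv.refl (Fin (2 * k + 1))) γ.toEquiv).tsum_eq]
  refine tsum_congr fun f => ?_
  have happly (j) : (Equiv.arrowCongr (Equiv.refl (Fin (2 * k + 1))) γ.toEquiv) f j = γ (f j) :=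
    rfl
  simp only [walkWeight, happly, apply_mem_gVertices_iff h, gC_apply h, gP_apply h,
    mem_closedBall, γ.dist_eq, mem_preimage]

end Equivariance

section Cylinders

variable {ι X Ξ : Type*}

/-- Which of the constraints of the cylinder `univ.pi B ×ˢ A` are satisfied by a point, where
the coordinates with `B i = univ` are ignored. Its fibres are cylinders that partition the space. -/
def cylinderPattern (B : ι → Set X) (A : Set Ξ) (p : (ι → X) × Ξ) :
    ({i | B i ≠ univ} → Prop) × Prop :=
  (fun i => p.1 i ∈ B i, p.2 ∈ A)

theorem cylinderPattern_preimage_true (B : ι → Set X) (A : Set Ξ) :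
    cylinderPattern B A ⁻¹' {(fun _ => True, True)} = univ.pi B ×ˢ A := by
  ext p
  suffices (∀ i, B i ≠ univ → p.1 i ∈ B i) ↔ ∀ i, p.1 i ∈ B i by
    simpa [cylinderPattern, Prod.ext_iff, funext_iff] using and_congr_left fun _ => this
  refine forall_congr' fun i => ⟨fun hi => ?_, fun hi _ => hi⟩
  by_cases hBi : B i = univ
  · exact hBi ▸ mem_univ _
  · exact hi hBi

variable [MeasurableSpace X] [MeasurableSpace Ξ]

/-- `B` and `A` define a measurable cylinder `univ.pi B ×ˢ A` of `X^ι × Ξ`, which constrains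
only finitely many coordinates. -/
structure IsCylinderBase (B : ι → Set X) (A : Set Ξ) : Prop where
  measurableSet_fst (i : ι) : MeasurableSet (B i)
  finite_ne_univ : {i | B i ≠ univ}.Finite
  measurableSet_snd : MeasurableSet A

theorem IsCylinderBase.measurableSet_prod [Countable ι] {B : ι → Set X} {A : Set Ξ}
    (h : IsCylinderBase B A) : MeasurableSet (univ.pi B ×ˢ A) :=
  (MeasurableSet.univ_pi h.measurableSet_fst).prod h.measurableSet_snd

theorem isCylinderBase_piecewise_univ {B : ι → Set X} {A : Set Ξ} (s : Finset ι)
    [∀ i, Decidable (i ∈ (s : Set ι))] (hB : ∀ i, MeasurableSet (B i)) (hA : MeasurableSet A) :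
    IsCylinderBase ((s : Set ι).piecewise B fun _ => univ) A where
  measurableSet_fst i := by
    by_cases hi : i ∈ (s : Set ι)
    · rw [piecewise_eq_of_mem _ _ _ hi]
      exact hB i
    · rw [piecewise_eq_of_notMem _ _ _ hi]
      exact .univ
  finite_ne_univ := s.finite_toSet.subset fun _ hi =>
    by_contra fun his => hi (piecewise_eq_of_notMem _ _ _ his)
  measurableSet_snd := hA

theorem ext_of_cylinders {μ ν : Measure ((ι → X) × Ξ)} [IsFiniteMeasure μ]
    (h : ∀ B A, IsCylinderBase B A → μ (univ.pi B ×ˢ A) = ν (univ.pi B ×ˢ A)) : μ = ν := by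
  classical
  have hspan : IsCountablySpanning
      (squareCylinders fun _ : ι => {S : Set X | MeasurableSet S}) :=
    ⟨fun _ => univ, fun _ => ⟨∅, fun _ => univ, fun _ _ => .univ, by simp⟩, iUnion_const _⟩
  refine ext_of_generate_finite _
    (generateFrom_eq_prod generateFrom_squareCylinders MeasurableSpace.generateFrom_measurableSet
      hspan isCountablySpanning_measurableSet).symm
    ((isPiSystem_squareCylinders (fun _ => MeasurableSpace.isPiSystem_measurableSet)
      fun _ => .univ).prod MeasurableSpace.isPiSystem_measurableSet) ?_ ?_
  · rintro _ ⟨_, ⟨s, B, hB, rfl⟩, A, hA, rfl⟩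
    simpa only [univ_pi_piecewise_univ] using
      h _ A (isCylinderBase_piecewise_univ s (fun i => hB i (mem_univ i)) hA)
  · simpa using h (fun _ => univ) univ ⟨fun _ => .univ, by simp, .univ⟩

theorem eq_of_forall_singleton_le {T : Type*} [MeasurableSpace T] [Countable T]
    [MeasurableSingletonClass T] {μ ν : Measure T} [IsProbabilityMeasure μ]
    [IsProbabilityMeasure ν] (h : ∀ t, μ {t} ≤ ν {t}) : μ = ν := by
  refine Measure.eq_of_le_of_isProbabilityMeasure (Measure.le_iff.2 fun s hs => ?_)
  rw [← Measure.tsum_indicator_apply_singleton μ s hs,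
    ← Measure.tsum_indicator_apply_singleton ν s hs]
  exact ENNReal.tsum_le_tsum fun t => indicator_le_indicator (h t)

theorem IsCylinderBase.measurable_cylinderPattern {B : ι → Set X} {A : Set Ξ}
    (h : IsCylinderBase B A) : Measurable (cylinderPattern B A) := by
  refine (measurable_pi_lambda _ fun i => ?_).prodMk ?_
  · exact ((measurable_pi_apply i.1).comp measurable_fst (h.measurableSet_fst i)).mem
  · exact (measurable_snd h.measurableSet_snd).mem

theorem IsCylinderBase.exists_cylinderPattern_preimage_singleton {B : ι → Set X} {A : Set Ξ}
    (h : IsCylinderBase B A) (t : ({i | B i ≠ univ} → Prop) × Prop) :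
    ∃ B' A', IsCylinderBase B' A' ∧ cylinderPattern B A ⁻¹' {t} = univ.pi B' ×ˢ A' := by
  refine ⟨fun i => {y | ∀ hi : B i ≠ univ, y ∈ B i ↔ t.1 ⟨i, hi⟩}, {ξ | ξ ∈ A ↔ t.2},
    ⟨fun i => ?_, h.finite_ne_univ.subset fun i hi hBi => hi ?_, ?_⟩, ?_⟩
  · rw [ofPred_forall]
    exact .iInter fun hi => (h.measurableSet_fst i).iff (.const _)
  · simp [hBi]
  · exact h.measurableSet_snd.iff (.const _)
  · ext p
    simp [cylinderPattern, Prod.ext_iff, funext_iff]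

theorem ext_of_cylinders_le {μ ν : Measure ((ι → X) × Ξ)} [IsProbabilityMeasure μ]
    [IsProbabilityMeasure ν]
    (h : ∀ B A, IsCylinderBase B A → μ (univ.pi B ×ˢ A) ≤ ν (univ.pi B ×ˢ A)) : μ = ν := by
  refine ext_of_cylinders fun B A hBA => ?_
  have : Finite {i | B i ≠ univ} := hBA.finite_ne_univ
  have hφ := hBA.measurable_cylinderPattern
  have := Measure.isProbabilityMeasure_map (μ := μ) hφ.aemeasurable
  have := Measure.isProbabilityMeasure_map (μ := ν) hφ.aemeasurable
  have hmap : μ.map (cylinderPattern B A) = ν.map (cylinderPattern B A) := by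
    refine eq_of_forall_singleton_le fun t => ?_
    obtain ⟨B', A', hB'A', ht⟩ := hBA.exists_cylinderPattern_preimage_singleton t
    rw [Measure.map_apply hφ (measurableSet_singleton t),
      Measure.map_apply hφ (measurableSet_singleton t), ht]
    exact h B' A' hB'A'
  rw [← cylinderPattern_preimage_true, ← Measure.map_apply hφ (measurableSet_singleton _), hmap,
    Measure.map_apply hφ (measurableSet_singleton _)]

end Cylinders

section WalkLaw

variable {X Ξ : Type*} [MetricSpace X] [MeasurableSpace X] [MeasurableSpace Ξ]

theorem measurable_encard_inter {G : Ξ → Config X} (hG : Measurable G) {S : Set X}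
    (hS : MeasurableSet S) : Measurable fun ξ => (((G ξ).1 ∩ S).encard : ℝ≥0∞) := by
  have hcount : Measurable fun s : Config X => (s.1 ∩ S).encard :=
    measurable_to_countable' fun n =>
      MeasurableSpace.measurableSet_generateFrom ⟨S, n, hS, rfl⟩
  exact (Measurable.of_discrete (f := ((↑) : ℕ∞ → ℝ≥0∞))).comp (hcount.comp hG)

/-- `Phat` is the family of measures `P̂_x`, with normalizing constant `Z`: the joint laws of the
environment and of the doubly infinite lazy walk started near `x`. -/
structure IsWalkLaw (ℙ : Measure Ξ) (G : Ξ → Config (X × X)) (Z : ℝ≥0∞)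
    (Phat : X → Measure ((ℤ → X) × Ξ)) : Prop where
  isProbabilityMeasure (x : X) : IsProbabilityMeasure (Phat x)
  measure_window (x : X) (A : Set Ξ) (hA : MeasurableSet A) (k : ℕ) (B : ℤ → Set X)
    (hB : ∀ i, MeasurableSet (B i)) :
    Phat x {p | (∀ i : ℤ, -(k : ℤ) ≤ i → i ≤ (k : ℤ) → p.1 i ∈ B i) ∧ p.2 ∈ A} =
      Z⁻¹ * ∫⁻ ξ in A, walkSum (G ξ) x k B ∂ℙ

namespace IsWalkLaw

variable {ℙ : Measure Ξ} {G : Ξ → Config (X × X)} {Z : ℝ≥0∞} {Phat : X → Measure ((ℤ → X) × Ξ)}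

theorem measure_cylinder (hP : IsWalkLaw ℙ G Z Phat) (x : X) {B : ℤ → Set X} {A : Set Ξ}
    (hB : ∀ i, MeasurableSet (B i)) (hA : MeasurableSet A) {k : ℕ}
    (hk : ∀ i, (k : ℤ) < |i| → B i = univ) :
    Phat x (univ.pi B ×ˢ A) = Z⁻¹ * ∫⁻ ξ in A, walkSum (G ξ) x k B ∂ℙ := by
  rw [← hP.measure_window x A hA k B hB]
  congr 1 with p
  refine and_congr_left fun _ => ⟨fun hp i _ _ => hp i trivial, fun hp i _ => ?_⟩
  rcases le_or_gt |i| k with hi | hi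
  · exact hp i (abs_le.1 hi).1 (abs_le.1 hi).2
  · exact hk i hi ▸ mem_univ _

theorem inv_mul_lintegral_walkSum_univ (hP : IsWalkLaw ℙ G Z Phat) (x : X) (k : ℕ) :
    Z⁻¹ * ∫⁻ ξ, walkSum (G ξ) x k (fun _ => univ) ∂ℙ = 1 := by
  have := hP.isProbabilityMeasure x
  rw [← setLIntegral_univ, ← hP.measure_cylinder x (fun _ => .univ) .univ fun _ _ => rfl,
    pi_univ, univ_prod_univ, measure_univ]

theorem lintegral_walkSum_univ (hP : IsWalkLaw ℙ G Z Phat) (x : X) (k : ℕ) :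
    ∫⁻ ξ, walkSum (G ξ) x k (fun _ => univ) ∂ℙ = Z := by
  rw [← inv_inv Z]
  exact ENNReal.eq_inv_of_mul_eq_one_left ((mul_comm _ _).trans
    (hP.inv_mul_lintegral_walkSum_univ x k))

theorem norm_ne_top [Nonempty X] (hP : IsWalkLaw ℙ G Z Phat) : Z ≠ ⊤ := by
  rintro rfl
  simpa using hP.inv_mul_lintegral_walkSum_univ (Classical.arbitrary X) 0

end IsWalkLaw

end WalkLaw

section AlmostSure

variable {X Ξ : Type*} [MetricSpace X] [MeasurableSpace Ξ] {ℙ : Measure Ξ}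

theorem ae_forall_of_ae_forall_closedBall [TopologicalSpace.SeparableSpace X] {p : Ξ → X → Prop}
    (h : ∀ x, ∀ᵐ ξ ∂ℙ, ∀ y ∈ closedBall x 1, p ξ y) : ∀ᵐ ξ ∂ℙ, ∀ y, p ξ y := by
  obtain ⟨s, hcount, hdense⟩ := TopologicalSpace.exists_countable_dense X
  filter_upwards [(ae_ball_iff hcount).2 fun x _ => h x] with ξ hξ y
  obtain ⟨x, hx, hyx⟩ := hdense.exists_dist_lt y one_pos
  exact hξ x hx y (mem_closedBall.2 hyx.le)

variable [MeasurableSpace X] [BorelSpace X] [SecondCountableTopology X]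
  {G : Ξ → Config (X × X)} {Z : ℝ≥0∞} {Phat : X → Measure ((ℤ → X) × Ξ)}

namespace IsWalkLaw

theorem ae_gC_ne_top (hP : IsWalkLaw ℙ G Z Phat) (hG : Measurable G) :
    ∀ᵐ ξ ∂ℙ, ∀ x, gC (G ξ) x ≠ ⊤ := by
  refine ae_forall_of_ae_forall_closedBall fun x => ?_
  have : Nonempty X := ⟨x⟩
  have hfinite : ∫⁻ ξ, (((G ξ).1 ∩ closedBall x 1 ×ˢ univ).encard : ℝ≥0∞) ∂ℙ ≠ ⊤ := by
    refine ne_top_of_le_ne_top hP.norm_ne_top ?_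
    rw [← hP.lintegral_walkSum_univ x 0]
    exact lintegral_mono fun ξ => encard_le_walkSum_zero_univ x
  filter_upwards [ae_lt_top (measurable_encard_inter hG
    (measurableSet_closedBall.prod .univ)) hfinite] with ξ hξ y hy
  refine ENNReal.add_ne_top.2 ⟨ne_top_of_le_ne_top hξ.ne (ENat.toENNReal_le.2 ?_),
    ENNReal.one_ne_top⟩
  rw [← (Prod.mk_right_injective y).encard_image]
  refine encard_le_encard ?_
  rintro _ ⟨z, hz, rfl⟩
  exact ⟨hz, hy, trivial⟩

-- A loop makes the walk lose mass in one step, which the normalization of `P̂_x` rules out.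
theorem ae_forall_mk_self_notMem (hP : IsWalkLaw ℙ G Z Phat) (hG : Measurable G)
    (hs : ∀ ξ, IsUndirected (G ξ)) : ∀ᵐ ξ ∂ℙ, ∀ x, (x, x) ∉ (G ξ).1 := by
  refine ae_forall_of_ae_forall_closedBall fun x => ?_
  have : Nonempty X := ⟨x⟩
  let S : Set (X × X) := diagonal X ∩ closedBall x 1 ×ˢ univ
  have hmeas : Measurable fun ξ => (((G ξ).1 ∩ S).encard : ℝ≥0∞) :=
    measurable_encard_inter hG (measurableSet_diagonal.inter (measurableSet_closedBall.prod .univ))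
  have hle : Z + ∫⁻ ξ, (((G ξ).1 ∩ S).encard : ℝ≥0∞) ∂ℙ ≤ Z :=
    calc Z + ∫⁻ ξ, (((G ξ).1 ∩ S).encard : ℝ≥0∞) ∂ℙ
        = ∫⁻ ξ, (walkSum (G ξ) x 1 (fun _ => univ) + ((G ξ).1 ∩ S).encard) ∂ℙ := by
          rw [lintegral_add_right _ hmeas, hP.lintegral_walkSum_univ]
      _ ≤ ∫⁻ ξ, walkSum (G ξ) x 0 (fun _ => univ) ∂ℙ := by
          refine lintegral_mono_ae ?_
          filter_upwards [hP.ae_gC_ne_top hG] with ξ hfin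
          exact walkSum_one_add_loops_le (hs ξ) hfin x
      _ = Z := hP.lintegral_walkSum_univ x 0
  have hzero : ∫⁻ ξ, (((G ξ).1 ∩ S).encard : ℝ≥0∞) ∂ℙ = 0 := by
    by_contra hne
    exact (ENNReal.lt_add_right hP.norm_ne_top hne).not_ge hle
  filter_upwards [(lintegral_eq_zero_iff hmeas).1 hzero] with ξ hξ y hy hloop
  have hempty : (G ξ).1 ∩ S = ∅ := by simpa using hξ
  exact notMem_empty (y, y) (hempty ▸ ⟨hloop, mem_diagonal y, hy, trivial⟩)

end IsWalkLaw

end AlmostSure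

section Stationarity

variable {X Ξ : Type*} [MeasurableSpace X] [MeasurableSpace Ξ]

/-- The time shift `s(w, ξ) = (w(· + 1), ξ)`, as a measurable bijection of `X^ℤ × Ξ`. -/
def timeShift : (ℤ → X) × Ξ ≃ᵐ (ℤ → X) × Ξ where
  toFun p := (fun n => p.1 (n + 1), p.2)
  invFun p := (fun n => p.1 (n - 1), p.2)
  left_inv p := by simp
  right_inv p := by simp
  measurable_toFun := by
    change Measurable fun p : (ℤ → X) × Ξ => ((fun n => p.1 (n + 1), p.2) : (ℤ → X) × Ξ)
    fun_prop
  measurable_invFun := by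
    change Measurable fun p : (ℤ → X) × Ξ => ((fun n => p.1 (n - 1), p.2) : (ℤ → X) × Ξ)
    fun_prop

theorem timeShift_preimage_univ_pi_prod (B : ℤ → Set X) (A : Set Ξ) :
    timeShift ⁻¹' (univ.pi B ×ˢ A) = univ.pi (fun i => B (i - 1)) ×ˢ A := by
  ext p
  refine and_congr_left fun _ => ?_
  simpa [timeShift] using (Equiv.addRight (1 : ℤ)).forall_congr fun i => by simp

theorem IsCylinderBase.exists_forall_eq_univ {B : ℤ → Set X} {A : Set Ξ}
    (h : IsCylinderBase B A) : ∃ k : ℕ, ∀ i, (k : ℤ) < |i| → B i = univ := by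
  obtain ⟨k, hk⟩ := (h.finite_ne_univ.image Int.natAbs).bddAbove
  refine ⟨k, fun i hi => by_contra fun hBi => hi.not_ge ?_⟩
  rw [Int.abs_eq_natAbs]
  exact_mod_cast hk (mem_image_of_mem _ hBi)

variable [MetricSpace X] [BorelSpace X]

theorem lintegral_measure_inter_closedBall [SecondCountableTopology X] {T Ω : Type*}
    [MeasurableSpace T] [MeasurableSpace Ω] (L : Measure T) [SFinite L] (Q : Measure Ω) [SFinite Q]
    {c : T → X} (hc : Measurable c) {f : Ω → X} (hf : Measurable f) {r : ℝ} {v : ℝ≥0∞}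
    (hv : ∀ y, L {t | dist y (c t) ≤ r} = v) {A : Set Ω} (hA : MeasurableSet A) :
    ∫⁻ t, Q (A ∩ {ω | f ω ∈ closedBall (c t) r}) ∂L = v * Q A := by
  let S : Set (T × Ω) := {q | q.2 ∈ A ∧ dist (f q.2) (c q.1) ≤ r}
  have hS : MeasurableSet S := (measurable_snd hA).inter
    (measurableSet_le ((hf.comp measurable_snd).dist (hc.comp measurable_fst)) measurable_const)
  have hfibre (ω : Ω) : L ((fun t => (t, ω)) ⁻¹' S) = A.indicator (fun _ => v) ω := by
    by_cases hω : ω ∈ A <;> simp [S, hω, hv]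
  calc ∫⁻ t, Q (A ∩ {ω | f ω ∈ closedBall (c t) r}) ∂L = (L.prod Q) S :=
        (Measure.prod_apply hS).symm
    _ = ∫⁻ ω, A.indicator (fun _ => v) ω ∂Q := by
        rw [Measure.prod_apply_symm hS, lintegral_congr hfibre]
    _ = v * Q A := lintegral_indicator_const hA v

theorem measurable_diagonalMap (γ : X ≃ᵢ X) {α : Ξ → Ξ} (hα : Measurable α) :
    Measurable (Prod.map (γ ∘ ·) α : (ℤ → X) × Ξ → (ℤ → X) × Ξ) :=
  (measurable_pi_lambda _ fun n =>
    γ.continuous.measurable.comp (measurable_pi_apply n)).prodMap hα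

variable {ℙ : Measure Ξ} {G : Ξ → Config (X × X)} {Z : ℝ≥0∞} {Phat : X → Measure ((ℤ → X) × Ξ)}

namespace IsWalkLaw

theorem map_diagonalMap (hP : IsWalkLaw ℙ G Z Phat) {γ : X ≃ᵢ X} {α : Ξ → Ξ}
    (hα : MeasurePreserving α ℙ ℙ)
    (hαG : ∀ ξ, (G (α ξ)).1 = (fun q : X × X => (γ q.1, γ q.2)) '' (G ξ).1) (x : X) :
    (Phat x).map (Prod.map (γ ∘ ·) α) = Phat (γ x) := by
  have hmap := measurable_diagonalMap γ hα.measurable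
  have := hP.isProbabilityMeasure x
  have := hP.isProbabilityMeasure (γ x)
  have := Measure.isProbabilityMeasure_map (μ := Phat x) hmap.aemeasurable
  refine (ext_of_cylinders_le fun B A h => ?_).symm
  obtain ⟨k, hk⟩ := h.exists_forall_eq_univ
  calc Phat (γ x) (univ.pi B ×ˢ A)
      = Z⁻¹ * ∫⁻ ξ in A, walkSum (G ξ) (γ x) k B ∂ℙ :=
        hP.measure_cylinder _ h.measurableSet_fst h.measurableSet_snd hk
    _ ≤ Z⁻¹ * ∫⁻ ξ in α ⁻¹' A, walkSum (G (α ξ)) (γ x) k B ∂ℙ := by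
        rw [← (hα.restrict_preimage h.measurableSet_snd).map_eq]
        gcongr Z⁻¹ * ?_
        exact lintegral_map_le _ _
    _ = Z⁻¹ * ∫⁻ ξ in α ⁻¹' A, walkSum (G ξ) x k (fun i => γ ⁻¹' B i) ∂ℙ := by
        simp only [walkSum_apply (hαG _)]
    _ = Phat x (univ.pi (fun i => γ ⁻¹' B i) ×ˢ (α ⁻¹' A)) := by
        refine (hP.measure_cylinder x (fun i => γ.continuous.measurable (h.measurableSet_fst i))
          (hα.measurable h.measurableSet_snd) fun i hi => ?_).symm
        rw [hk i hi, preimage_univ]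
    _ = (Phat x).map (Prod.map (γ ∘ ·) α) (univ.pi B ×ˢ A) :=
        (Measure.map_apply hmap h.measurableSet_prod).symm

theorem measure_inter_closedBall_apply (hP : IsWalkLaw ℙ G Z Phat) {γ : X ≃ᵢ X} {α : Ξ → Ξ}
    (hα : MeasurePreserving α ℙ ℙ)
    (hαG : ∀ ξ, (G (α ξ)).1 = (fun q : X × X => (γ q.1, γ q.2)) '' (G ξ).1)
    {A : Set ((ℤ → X) × Ξ)} (hA : MeasurableSet A) (hinv : Prod.map (γ ∘ ·) α ⁻¹' A = A) (i : ℤ)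
    (x y : X) :
    Phat (γ x) (A ∩ {p | p.1 i ∈ closedBall (γ y) 1}) =
      Phat x (A ∩ {p | p.1 i ∈ closedBall y 1}) := by
  have hpre : Prod.map (γ ∘ ·) α ⁻¹' {p : (ℤ → X) × Ξ | p.1 i ∈ closedBall (γ y) 1} =
      {p | p.1 i ∈ closedBall y 1} := by
    ext p
    simp [γ.dist_eq]
  have hmeas : MeasurableSet {p : (ℤ → X) × Ξ | p.1 i ∈ closedBall (γ y) 1} :=
    (measurable_pi_apply i).comp measurable_fst measurableSet_closedBall
  rw [← hP.map_diagonalMap hα hαG,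
    Measure.map_apply (measurable_diagonalMap γ hα.measurable) (hA.inter hmeas), preimage_inter,
    hinv, hpre]

variable [SecondCountableTopology X]

theorem map_timeShift_restrict (hP : IsWalkLaw ℙ G Z Phat) (hG : Measurable G)
    (hs : ∀ ξ, IsUndirected (G ξ)) (a b : X) :
    ((Phat a).restrict {p | p.1 1 ∈ closedBall b 1}).map timeShift =
      (Phat b).restrict {p | p.1 (-1) ∈ closedBall a 1} := by
  have := hP.isProbabilityMeasure a
  refine ext_of_cylinders fun B A h => ?_
  obtain ⟨k, hk⟩ := h.exists_forall_eq_univ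
  have hBL (i : ℤ) : MeasurableSet (B (i - 1) ∩ pinned 1 b i) :=
    (h.measurableSet_fst _).inter (measurableSet_pinned 1 b i)
  have hBR (i : ℤ) : MeasurableSet (B i ∩ pinned (-1) a i) :=
    (h.measurableSet_fst i).inter (measurableSet_pinned (-1) a i)
  have hkL (i : ℤ) (hi : ((k + 1 : ℕ) : ℤ) < |i|) : B (i - 1) ∩ pinned 1 b i = univ := by
    rw [hk _ (by grind), pinned_of_ne (by grind), inter_univ]
  have hkR (i : ℤ) (hi : ((k + 1 : ℕ) : ℤ) < |i|) : B i ∩ pinned (-1) a i = univ := by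
    rw [hk _ (by grind), pinned_of_ne (by grind), inter_univ]
  rw [timeShift.map_apply, Measure.restrict_apply (timeShift.measurable h.measurableSet_prod),
    Measure.restrict_apply h.measurableSet_prod, timeShift_preimage_univ_pi_prod,
    univ_pi_prod_inter_mem_closedBall, univ_pi_prod_inter_mem_closedBall,
    hP.measure_cylinder a hBL h.measurableSet_snd hkL,
    hP.measure_cylinder b hBR h.measurableSet_snd hkR]
  congr 1
  refine lintegral_congr_ae (ae_restrict_of_ae ?_)
  filter_upwards [hP.ae_gC_ne_top hG, hP.ae_forall_mk_self_notMem hG hs] with ξ hfin hloop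
  exact walkSum_shift (hs ξ) hfin hloop hk a b

theorem measure_inter_eq_measure_image_timeShift_inter (hP : IsWalkLaw ℙ G Z Phat)
    (hG : Measurable G) (hs : ∀ ξ, IsUndirected (G ξ)) (a b : X) {A : Set ((ℤ → X) × Ξ)}
    (hA : MeasurableSet A) :
    Phat a (A ∩ {p | p.1 1 ∈ closedBall b 1}) =
      Phat b (timeShift '' A ∩ {p | p.1 (-1) ∈ closedBall a 1}) := by
  have hsA : MeasurableSet (timeShift '' A) := timeShift.measurableSet_image.2 hA
  rw [← Measure.restrict_apply hsA, ← hP.map_timeShift_restrict hG hs, timeShift.map_apply,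
    timeShift.injective.preimage_image, Measure.restrict_apply hA]

end IsWalkLaw

end Stationarity

theorem environment_viewed_by_walker_stationary_general
    {X : Type*} [MetricSpace X] [ProperSpace X] [PreconnectedSpace X] [MeasurableSpace X]
    [BorelSpace X] (hsym : PointSymmetric X) (o : X)
    {Ξ : Type*} [MeasurableSpace Ξ] {ℙ : Measure Ξ} {G : Ξ → Config (X × X)} (hG : Measurable G)
    (hGsym : ∀ ξ, IsUndirected (G ξ)) {act : (X ≃ᵢ X) → Ξ → Ξ}
    (hact : ∀ γ, MeasurePreserving (act γ) ℙ ℙ)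
    (hactG : ∀ γ ξ, (G (act γ ξ)).1 = (fun q : X × X => (γ q.1, γ q.2)) '' (G ξ).1)
    {Z : ℝ≥0∞} {Phat : X → Measure ((ℤ → X) × Ξ)} (hP : IsWalkLaw ℙ G Z Phat)
    {A : Set ((ℤ → X) × Ξ)} (hA : MeasurableSet A)
    (hinv : ∀ γ : X ≃ᵢ X, Prod.map (γ ∘ ·) (act γ) ⁻¹' A = A) :
    Phat o (timeShift '' A) = Phat o A := by
  have : Nonempty X := ⟨o⟩
  have := hP.isProbabilityMeasure o
  let L : Measure (X ≃ᵢ X) := Measure.haar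
  have := isInvInvariant_of_pointSymmetric L hsym
  have average (i : ℤ) {S : Set ((ℤ → X) × Ξ)} (hS : MeasurableSet S) :
      ∫⁻ g, Phat o (S ∩ {p | p.1 i ∈ closedBall (g o) 1}) ∂L = L (isoBall o 1) * Phat o S :=
    lintegral_measure_inter_closedBall L (Phat o) (continuous_iso_apply_const o).measurable
      ((measurable_pi_apply i).comp measurable_fst) (measure_dist_apply_le_one L hsym o) hS
  refine (ENNReal.mul_right_inj (measure_isoBall_ne_zero L o one_pos)
    (measure_isoBall_ne_top L o 1)).1 ?_
  calc L (isoBall o 1) * Phat o (timeShift '' A)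
      = ∫⁻ g, Phat o (timeShift '' A ∩ {p | p.1 (-1) ∈ closedBall (g o) 1}) ∂L :=
        (average (-1) (timeShift.measurableSet_image.2 hA)).symm
    _ = ∫⁻ g, Phat (g o) (A ∩ {p | p.1 1 ∈ closedBall o 1}) ∂L := lintegral_congr fun g =>
        (hP.measure_inter_eq_measure_image_timeShift_inter hG hGsym (g o) o hA).symm
    _ = ∫⁻ g, Phat (g⁻¹ o) (A ∩ {p | p.1 1 ∈ closedBall o 1}) ∂L :=
        (lintegral_inv_eq_self fun g : X ≃ᵢ X => Phat (g o) (A ∩ {p | p.1 1 ∈ closedBall o 1})).symm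
    _ = ∫⁻ g, Phat o (A ∩ {p | p.1 1 ∈ closedBall (g o) 1}) ∂L := lintegral_congr fun g => by
        rw [← hP.measure_inter_closedBall_apply (hact g) (hactG g) hA (hinv g),
          IsometryEquiv.apply_inv_self]
    _ = L (isoBall o 1) * Phat o A := average 1 hA

open scoped Classical in
/-- **Proposition 14 (stationarity of the environment seen from the walker).**
Let `G` be an isometry-equivariant random graph over the probability space `(Ξ, ℙ)` with
`Z < ∞`, and for `x ∈ X` let `P̂_x` be the joint law of the environment and the doubly
infinite lazy simple random walk `w` on `G` started from a biased vertex near `x`, i.e.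
the measure on `X^ℤ × Ξ` whose finite dimensional distributions are given by `hPhat`.
Then `P̂_0` is invariant under the time shift `s(w, ξ) = (w(·+1), ξ)` on every
isometry invariant set `A`. -/
theorem environment_viewed_by_walker_stationary
    {X : Type*} [MetricSpace X] [ProperSpace X] [CompleteSpace X] [SimplyConnectedSpace X]
    [NoncompactSpace X] [MeasurableSpace X] [BorelSpace X] [Nonempty X]
    (hsym : PointSymmetric X)
    (μ : Measure X)
    (hμiso : ∀ γ : X ≃ᵢ X, Measure.map γ μ = μ)
    (hμball : ∀ (x : X) (r : ℝ), 0 < r → 0 < μ (closedBall x r) ∧ μ (closedBall x r) < ⊤)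
    (o : X)
    {Ξ : Type*} [MeasurableSpace Ξ] (ℙ : Measure Ξ) [IsProbabilityMeasure ℙ]
    (G : Ξ → Config (X × X)) (hGmeas : Measurable G)
    (hGsym : ∀ ξ (x y : X), (x, y) ∈ (G ξ).1 ↔ (y, x) ∈ (G ξ).1)
    -- the isometries of `X` act on `Ξ` preserving `ℙ`, compatibly with `G`:
    (act : (X ≃ᵢ X) → Ξ → Ξ)
    (hact : ∀ γ, MeasurePreserving (act γ) ℙ ℙ)
    (hactG : ∀ γ ξ, (G (act γ ξ)).1 = (fun q : X × X => (γ q.1, γ q.2)) '' (G ξ).1)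
    (hZpos : 0 < walkNorm ℙ G o) (hZfin : walkNorm ℙ G o < ⊤)
    (Phat : X → Measure ((ℤ → X) × Ξ))
    (hPhatProb : ∀ x, IsProbabilityMeasure (Phat x))
    (hPhat : ∀ (x : X) (A : Set Ξ), MeasurableSet A → ∀ (k : ℕ) (B : ℤ → Set X),
      (∀ i, MeasurableSet (B i)) →
      Phat x {p : (ℤ → X) × Ξ |
          (∀ i : ℤ, -(k : ℤ) ≤ i → i ≤ (k : ℤ) → p.1 i ∈ B i) ∧ p.2 ∈ A} =
        (walkNorm ℙ G o)⁻¹ *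
          ∫⁻ ξ in A, ∑' f : Fin (2 * k + 1) → X,
            (if (∀ j : Fin (2 * k + 1), f j ∈ gVertices (G ξ) ∧ f j ∈ B ((j : ℤ) - k)) ∧
                f ⟨k, by omega⟩ ∈ closedBall x 1
             then walkWeight (G ξ) k f else 0) ∂ℙ) :
    ∀ A : Set ((ℤ → X) × Ξ), MeasurableSet A →
      (∀ γ : X ≃ᵢ X, (fun p : (ℤ → X) × Ξ => (fun n => γ (p.1 n), act γ p.2)) ⁻¹' A = A) →
      Phat o ((fun p : (ℤ → X) × Ξ => (fun n => p.1 (n + 1), p.2)) '' A) = Phat o A := by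
  intro A hA hinv
  have hP : IsWalkLaw ℙ G (walkNorm ℙ G o) Phat := ⟨hPhatProb, hPhat⟩
  exact environment_viewed_by_walker_stationary_general hsym o hGmeas hGsym hact hactG hP hA hinv

end BooleanModel
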